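/- arXiv:1004.0241 — 3 statements merged into one kernel-verified Lean document; each statement's English description precedes it below -/
import Mathlib

section
/- Let K be a field, n ≥ 1, and V a linear subspace of M_n(K) with codimension strictly less than n-1. Then V generates M_n(K) as a multiplicative semigroup: every matrix in M_n(K) is a finite product of matrices belonging to V. -/
open Matrix Module

theorem LinearMap.exists_extend_of_forall_eq_zero {K E F : Type*} [Field K] [AddCommGroup E]
    [Module K E] [AddCommGroup F] [Module K F] (W : Submodule K E) (h : E →ₗ[K] F)
    (g : E →ₗ[K] K) (hg : ∀ w ∈ W, h w = 0 → g w = 0) :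
    ∃ l : F →ₗ[K] K, ∀ w ∈ W, l (h w) = g w := by
  have hmem : g.domRestrict W ∈ LinearMap.range (h.domRestrict W).dualMap := by
    rw [LinearMap.range_dualMap_eq_dualAnnihilator_ker, Submodule.mem_dualAnnihilator]
    intro w hw
    exact hg w w.2 hw
  obtain ⟨l, hl⟩ := hmem
  exact ⟨l, fun w hw => LinearMap.congr_fun hl ⟨w, hw⟩⟩

theorem exists_dotProduct_eq {K ι : Type*} [Field K] [Fintype ι] [DecidableEq ι]
    (f : (ι → K) →ₗ[K] K) : ∃ x : ι → K, ∀ v, f v = v ⬝ᵥ x := by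
  refine ⟨fun i => f (Pi.single i 1), fun v => ?_⟩
  conv_lhs => rw [pi_eq_sum_univ' v]
  simp [dotProduct]

theorem exists_ne_zero_forall_dotProduct_eq_zero {K ι : Type*} [Field K] [Fintype ι]
    [DecidableEq ι] (N : Submodule K (ι → K)) (hN : finrank K N < Fintype.card ι) :
    ∃ x : ι → K, x ≠ 0 ∧ ∀ v ∈ N, v ⬝ᵥ x = 0 := by
  have hlt : N < ⊤ := lt_top_iff_ne_top.2 fun h => by
    rw [h, finrank_top, finrank_fintype_fun_eq_card] at hN
    exact hN.false
  obtain ⟨f, hf0, hf⟩ := N.exists_le_ker_of_lt_top hlt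
  obtain ⟨x, hx⟩ := exists_dotProduct_eq f
  refine ⟨x, ?_, fun v hv => by rw [← hx]; exact hf hv⟩
  rintro rfl
  exact hf0 (LinearMap.ext fun v => by simp [hx])

theorem exists_unit_mulVec_single_eq {K : Type*} [Field K] {m : ℕ} {p : Fin (m + 1) → K}
    (hp : p ≠ 0) : ∃ P : (Matrix (Fin (m + 1)) (Fin (m + 1)) K)ˣ,
      P.val *ᵥ Pi.single 0 1 = p := by
  obtain ⟨i, hi⟩ := Function.ne_iff.1 hp
  have hdet : IsUnit (((1 : Matrix (Fin (m + 1)) (Fin (m + 1)) K).updateCol i p).submatrix id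
      (Equiv.swap 0 i)) := by
    rw [isUnit_iff_isUnit_det, det_permute', ← cramer_apply, cramer_one]
    simp only [Module.End.one_apply]
    exact (((Equiv.Perm.sign (Equiv.swap 0 i)).isUnit.map (Int.castRingHom K))).mul
      (isUnit_iff_ne_zero.2 hi)
  refine ⟨hdet.unit, ?_⟩
  ext a
  simp

/-- The matrix with first column `Pi.single 0 1`, first row `1, r` and lower right block `N`. -/
def borderedMatrix {K : Type*} [Field K] {m : ℕ} (r : Fin m → K) (N : Matrix (Fin m) (Fin m) K) :
    Matrix (Fin (m + 1)) (Fin (m + 1)) K :=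
  of (Fin.cons (Fin.cons 1 r) fun i => Fin.cons 0 (N i))

theorem det_borderedMatrix {K : Type*} [Field K] {m : ℕ} (r : Fin m → K)
    (N : Matrix (Fin m) (Fin m) K) : (borderedMatrix r N).det = N.det := by
  rw [det_succ_column_zero, Fin.sum_univ_succ]
  simp [borderedMatrix]
  rfl

theorem borderedMatrix_mulVec_single {K : Type*} [Field K] {m : ℕ} (r : Fin m → K)
    (N : Matrix (Fin m) (Fin m) K) :
    borderedMatrix r N *ᵥ Pi.single 0 1 = Pi.single 0 1 := by
  ext a
  cases a using Fin.cases <;> simp [borderedMatrix]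

theorem trace_borderedMatrix_mul {K : Type*} [Field K] {m : ℕ} (r : Fin m → K)
    (N : Matrix (Fin m) (Fin m) K) (B : Matrix (Fin (m + 1)) (Fin (m + 1)) K) :
    (borderedMatrix r N * B).trace =
      B 0 0 + r ⬝ᵥ (fun i => B i.succ 0) + (N * B.submatrix Fin.succ Fin.succ).trace := by
  simp [trace, mul_apply, Fin.sum_univ_succ, borderedMatrix, dotProduct]

/-- Every linear form on a space of matrices of dimension less than `n` is represented, through
the trace, by an invertible matrix. -/
def RepresentedByUnits (K : Type*) [Field K] (n : ℕ) : Prop :=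
  ∀ (W : Submodule K (Matrix (Fin n) (Fin n) K)) (f : Matrix (Fin n) (Fin n) K →ₗ[K] K),
    finrank K W < n → ∃ A : (Matrix (Fin n) (Fin n) K)ˣ, ∀ B ∈ W, (A.val * B).trace = f B

theorem RepresentedByUnits.exists_fixing_single {K : Type*} [Field K] {m : ℕ}
    (hm : RepresentedByUnits K m) (W : Submodule K (Matrix (Fin (m + 1)) (Fin (m + 1)) K))
    (f : Matrix (Fin (m + 1)) (Fin (m + 1)) K →ₗ[K] K)
    (hf : ∀ B ∈ W, (∀ i : Fin m, ∀ j, B i.succ j = 0) → f B = B 0 0)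
    (hW : finrank K W < m ∨ finrank K W ≤ m ∧ ((∃ B ∈ W, ∃ i : Fin m, B i.succ 0 ≠ 0) ∨
      ∃ B ∈ W, B ≠ 0 ∧ ∀ i : Fin m, ∀ j, B i.succ j = 0)) :
    ∃ A : (Matrix (Fin (m + 1)) (Fin (m + 1)) K)ˣ,
      A.val *ᵥ Pi.single 0 1 = Pi.single 0 1 ∧ ∀ B ∈ W, (A.val * B).trace = f B := by
  let col : Matrix (Fin (m + 1)) (Fin (m + 1)) K →ₗ[K] (Fin m → K) :=
    { toFun := fun B i => B i.succ 0, map_add' := fun _ _ => rfl, map_smul' := fun _ _ => rfl }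
  let sub : Matrix (Fin (m + 1)) (Fin (m + 1)) K →ₗ[K] Matrix (Fin m) (Fin m) K :=
    { toFun := fun B => B.submatrix Fin.succ Fin.succ, map_add' := fun _ _ => rfl
      map_smul' := fun _ _ => rfl }
  let e : Matrix (Fin (m + 1)) (Fin (m + 1)) K →ₗ[K] K := Matrix.entryLinearMap K K 0 0
  have hsub : ∀ B, col B = 0 → sub B = 0 → ∀ i : Fin m, ∀ j, B i.succ j = 0 := by
    intro B h1 h2 i j
    cases j using Fin.cases with
    | zero => exact congrFun h1 i
    | succ j => exact congrFun (congrFun h2 i) j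
  let W₁ := W ⊓ LinearMap.ker col
  have hle : finrank K W₁ ≤ finrank K W := Submodule.finrank_mono inf_le_left
  have hrank : finrank K (W₁.map sub) < m := by
    have hmap : finrank K (W₁.map sub) ≤ finrank K W₁ := Submodule.finrank_map_le _ _
    rcases hW with h | ⟨h, ⟨B, hB, i, hi⟩ | ⟨B, hB, hB0, hi⟩⟩
    · omega
    · have : finrank K W₁ < finrank K W := Submodule.finrank_lt_finrank_of_lt
        (lt_of_le_of_ne inf_le_left fun h => hi (congrFun ((h ▸ hB : B ∈ W₁).2) i))
      omega
    · have hBW : B ∈ W₁ := ⟨hB, funext fun i => hi i 0⟩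
      have h1 := (sub.domRestrict W₁).finrank_range_add_finrank_ker
      have h2 : 0 < finrank K (LinearMap.ker (sub.domRestrict W₁)) := by
        refine Nat.pos_of_ne_zero fun h0 => hB0 ?_
        have hker : (⟨B, hBW⟩ : W₁) ∈ LinearMap.ker (sub.domRestrict W₁) := by
          ext i j
          exact hi i j.succ
        rw [Submodule.finrank_eq_zero.1 h0, Submodule.mem_bot] at hker
        exact congrArg Subtype.val hker
      rw [LinearMap.range_domRestrict] at h1
      omega
  obtain ⟨l, hl⟩ := LinearMap.exists_extend_of_forall_eq_zero W₁ sub (f - e) fun B hB h => by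
    simp [e, hf B hB.1 (hsub B hB.2 h)]
  obtain ⟨N, hN⟩ := hm _ l hrank
  obtain ⟨k, hk⟩ := LinearMap.exists_extend_of_forall_eq_zero W col
    (f - e - (Matrix.traceLinearMap (Fin m) K K ∘ₗ LinearMap.mulLeft K N.val) ∘ₗ sub)
    fun B hB h => by
      have h1 := hN (sub B) (Submodule.mem_map_of_mem ⟨hB, h⟩)
      rw [hl B ⟨hB, h⟩] at h1
      simp [h1]
  obtain ⟨r, hr⟩ := exists_dotProduct_eq k
  have hunit : IsUnit (borderedMatrix r N.val) := by
    rw [isUnit_iff_isUnit_det, det_borderedMatrix, ← isUnit_iff_isUnit_det]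
    exact N.isUnit
  refine ⟨hunit.unit, borderedMatrix_mulVec_single _ _, fun B hB => ?_⟩
  have h := hk B hB
  rw [hr, dotProduct_comm] at h
  have h' : (r ⬝ᵥ fun i => B i.succ 0) =
    f B - B 0 0 - (N.val * B.submatrix Fin.succ Fin.succ).trace := h
  rw [IsUnit.unit_spec, trace_borderedMatrix_mul, h']
  ring

theorem RepresentedByUnits.exists_mulVec_eq {K : Type*} [Field K] {m : ℕ}
    (hm : RepresentedByUnits K m) (W : Submodule K (Matrix (Fin (m + 1)) (Fin (m + 1)) K))
    (f : Matrix (Fin (m + 1)) (Fin (m + 1)) K →ₗ[K] K) {p x : Fin (m + 1) → K}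
    (hp : p ≠ 0) (hx : x ≠ 0) (hf : ∀ ψ, vecMulVec p ψ ∈ W → f (vecMulVec p ψ) = ψ ⬝ᵥ x)
    (hW : finrank K W < m ∨ finrank K W ≤ m ∧ ((∃ B ∈ W, ∀ c : K, B *ᵥ x ≠ c • p) ∨
      ∃ ψ, ψ ≠ 0 ∧ vecMulVec p ψ ∈ W)) :
    ∃ A : (Matrix (Fin (m + 1)) (Fin (m + 1)) K)ˣ,
      A.val *ᵥ p = x ∧ ∀ B ∈ W, (A.val * B).trace = f B := by
  obtain ⟨P, hP⟩ := exists_unit_mulVec_single_eq hp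
  obtain ⟨Q, hQ⟩ := exists_unit_mulVec_single_eq hx
  have hP' : P⁻¹.val *ᵥ p = Pi.single 0 1 := by
    rw [← hP, mulVec_mulVec, Units.inv_mul, one_mulVec]
  have hQ' : Q⁻¹.val *ᵥ x = Pi.single 0 1 := by
    rw [← hQ, mulVec_mulVec, Units.inv_mul, one_mulVec]
  let L := LinearMap.mulLeft K P⁻¹.val ∘ₗ LinearMap.mulRight K Q.val
  let L' := LinearMap.mulLeft K P.val ∘ₗ LinearMap.mulRight K Q⁻¹.val
  have hL : ∀ B, L B = P⁻¹.val * (B * Q.val) := fun _ => rfl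
  have hL' : ∀ B, L' B = P.val * (B * Q⁻¹.val) := fun _ => rfl
  have hLL : ∀ B, L' (L B) = B := fun B => by simp [hL, hL', mul_assoc]
  have hle : finrank K (W.map L) ≤ finrank K W := Submodule.finrank_map_le _ _
  have hrow : ∀ C : Matrix (Fin (m + 1)) (Fin (m + 1)) K, (∀ i : Fin m, ∀ j, C i.succ j = 0) →
      C = vecMulVec (Pi.single 0 1) (C 0) := by
    intro C hC
    ext i j
    cases i using Fin.cases <;> simp [vecMulVec_apply, hC]
  obtain ⟨A, hA, hA'⟩ := hm.exists_fixing_single (W.map L) (f ∘ₗ L') (by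
    rintro _ ⟨B, hB, rfl⟩ h
    have h1 : B = vecMulVec p (L B 0 ᵥ* Q⁻¹.val) := by
      conv_lhs => rw [← hLL B, hrow _ h, hL', vecMulVec_mul, mul_vecMulVec, hP]
    have h2 := hf _ (h1 ▸ hB)
    rw [← h1, ← dotProduct_mulVec, hQ'] at h2
    simp [hLL, h2]) (by
    rcases hW with h | ⟨h, ⟨B, hB, hBx⟩ | ⟨ψ, hψ, hB⟩⟩
    · exact Or.inl (by omega)
    · refine Or.inr ⟨by omega, Or.inl ⟨L B, Submodule.mem_map_of_mem hB, ?_⟩⟩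
      by_contra! hcon
      apply hBx (L B 0 0)
      have h1 : L B *ᵥ Pi.single 0 1 = L B 0 0 • Pi.single 0 1 := by
        ext i
        cases i using Fin.cases <;> simp [hcon]
      rw [← hP, ← mulVec_smul, ← h1, ← hQ, hL, mulVec_mulVec, mulVec_mulVec,
        Units.mul_inv_cancel_left]
    · refine Or.inr ⟨by omega, Or.inr ⟨L (vecMulVec p ψ), Submodule.mem_map_of_mem hB, ?_, ?_⟩⟩
      · intro h0
        have h1 : vecMulVec p ψ = 0 := by rw [← hLL (vecMulVec p ψ), h0, map_zero]
        rw [vecMulVec_eq_zero] at h1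
        tauto
      · intro i j
        rw [hL, vecMulVec_mul, mul_vecMulVec, hP']
        simp [vecMulVec_apply])
  refine ⟨Q * A * P⁻¹, ?_, fun B hB => ?_⟩
  · simp only [Units.val_mul, ← mulVec_mulVec, hP', hA, hQ]
  · have h := hA' _ (Submodule.mem_map_of_mem (f := L) hB)
    rw [LinearMap.comp_apply f, hLL, hL] at h
    rw [← h, Units.val_mul, Units.val_mul, mul_assoc, mul_assoc, trace_mul_comm]
    simp only [mul_assoc]

theorem vecMulVec_right_injective {K ι : Type*} [Field K] {p : ι → K} (hp : p ≠ 0) :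
    Function.Injective (vecMulVec p : (ι → K) → Matrix ι ι K) := by
  intro ψ ψ' h
  have h0 : vecMulVec p (ψ - ψ') = 0 := by rw [vecMulVec_sub, sub_eq_zero]; exact h
  rw [vecMulVec_eq_zero] at h0
  exact sub_eq_zero.1 (h0.resolve_left hp)

theorem finrank_comap_vecMulVecBilin_le {K ι : Type*} [Field K] [Fintype ι]
    (W : Submodule K (Matrix ι ι K)) {p : ι → K} (hp : p ≠ 0) :
    finrank K (W.comap (vecMulVecBilin K K p)) ≤ finrank K W := by
  rw [(Submodule.equivMapOfInjective (vecMulVecBilin K K p) (vecMulVec_right_injective hp)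
    _).finrank_eq]
  exact Submodule.finrank_mono (Submodule.map_comap_le _ _)

theorem representedByUnits (K : Type*) [Field K] (n : ℕ) : RepresentedByUnits K n := by
  induction n with
  | zero => exact fun W f hW => absurd hW (Nat.not_lt_zero _)
  | succ m ih =>
    intro W f hW
    by_cases hp : ∃ p ψ : Fin (m + 1) → K, p ≠ 0 ∧ ψ ≠ 0 ∧ vecMulVec p ψ ∈ W
    · obtain ⟨p, ψ, hp, hψ, hmem⟩ := hp
      have hx : ∃ x, x ≠ 0 ∧ ∀ ψ, vecMulVec p ψ ∈ W → f (vecMulVec p ψ) = ψ ⬝ᵥ x := by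
        obtain ⟨x, hx⟩ := exists_dotProduct_eq (f ∘ₗ vecMulVecBilin K K p)
        by_cases hx0 : x = 0
        · obtain ⟨y, hy, hy'⟩ := exists_ne_zero_forall_dotProduct_eq_zero
            (W.comap (vecMulVecBilin K K p)) (by
              rw [Fintype.card_fin]
              exact (finrank_comap_vecMulVecBilin_le W hp).trans_lt hW)
          refine ⟨y, hy, fun ψ hψ => ?_⟩
          rw [hy' ψ hψ]
          simpa [hx0] using hx ψ
        · exact ⟨x, hx0, fun ψ _ => hx ψ⟩
      obtain ⟨x, hx0, hx⟩ := hx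
      obtain ⟨A, -, hA⟩ := ih.exists_mulVec_eq W f hp hx0 hx
        (Or.inr ⟨Nat.lt_succ_iff.1 hW, Or.inr ⟨ψ, hψ, hmem⟩⟩)
      exact ⟨A, hA⟩
    · by_cases hW0 : W = ⊥
      · exact ⟨1, fun B hB => by simp [(Submodule.mem_bot K).1 (hW0 ▸ hB)]⟩
      · obtain ⟨B, hB, hB0⟩ := Submodule.exists_mem_ne_zero_of_ne_bot hW0
        obtain ⟨x, hx⟩ : ∃ x, B *ᵥ x ≠ 0 := by
          by_contra! h
          exact hB0 (ext_of_mulVec_single fun i => by simp only [h, zero_mulVec])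
        have hx0 : x ≠ 0 := by
          rintro rfl
          simp at hx
        have hpos : finrank K W ≠ 0 := fun h => hW0 (Submodule.finrank_eq_zero.1 h)
        obtain ⟨p, hpB⟩ : ∃ p, p ∉ K ∙ (B *ᵥ x) := by
          by_contra! h
          have h1 := finrank_span_singleton (K := K) hx
          rw [(Submodule.eq_top_iff'.2 h : K ∙ (B *ᵥ x) = ⊤), finrank_top,
            finrank_fintype_fun_eq_card, Fintype.card_fin] at h1
          omega
        have hp0 : p ≠ 0 := by
          rintro rfl
          exact hpB (Submodule.zero_mem _)
        have hBx : ∀ c : K, B *ᵥ x ≠ c • p := by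
          intro c hc
          have hc0 : c ≠ 0 := by
            rintro rfl
            exact hx (by simpa using hc)
          exact hpB (Submodule.mem_span_singleton.2 ⟨c⁻¹, by rw [hc, inv_smul_smul₀ hc0]⟩)
        have hψ0 : ∀ ψ, vecMulVec p ψ ∈ W → ψ = 0 := by
          intro ψ hψ
          by_contra h
          exact hp ⟨p, ψ, hp0, h, hψ⟩
        obtain ⟨A, -, hA⟩ := ih.exists_mulVec_eq W f hp0 hx0
          (fun ψ hψ => by simp [hψ0 ψ hψ])
          (Or.inr ⟨Nat.lt_succ_iff.1 hW, Or.inl ⟨B, hB, hBx⟩⟩)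
        exact ⟨A, hA⟩

theorem exists_unit_orthogonal_dotProduct_mulVec_eq_zero {K : Type*} [Field K] {n : ℕ}
    (W : Submodule K (Matrix (Fin n) (Fin n) K)) (hW : finrank K W + 2 ≤ n) {p : Fin n → K}
    (hp : p ≠ 0) (φ : Fin n → K) :
    ∃ A : (Matrix (Fin n) (Fin n) K)ˣ,
      (∀ B ∈ W, (A.val * B).trace = 0) ∧ ∀ B ∈ W, φ ᵥ* B ⬝ᵥ A.val *ᵥ p = 0 := by
  obtain ⟨m, rfl⟩ : ∃ m, n = m + 1 := ⟨n - 1, by omega⟩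
  let L : Matrix (Fin (m + 1)) (Fin (m + 1)) K →ₗ[K] (Fin (m + 1) → K) := vecMulBilin K K φ
  have hx : ∃ x, x ≠ 0 ∧ (∀ B ∈ W, φ ᵥ* B ⬝ᵥ x = 0) ∧ ∀ ψ, vecMulVec p ψ ∈ W → ψ ⬝ᵥ x = 0 := by
    by_cases h : φ ⬝ᵥ p = 0
    · let Ψ := W.comap (vecMulVecBilin K K p)
      have hΨ : finrank K Ψ ≤ finrank K (W ⊓ LinearMap.ker L : Submodule K _) := by
        refine le_trans (Submodule.finrank_mono ?_)
          (finrank_comap_vecMulVecBilin_le (W ⊓ LinearMap.ker L) hp)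
        intro ψ hψ
        refine ⟨hψ, ?_⟩
        change φ ᵥ* vecMulVec p ψ = 0
        rw [vecMul_vecMulVec, h, zero_smul]
      have hsum : finrank K (W.map L) + finrank K (W ⊓ LinearMap.ker L : Submodule K _) =
          finrank K W := by
        rw [← Submodule.map_comap_subtype, ← (Submodule.equivMapOfInjective W.subtype
          W.injective_subtype _).finrank_eq, ← LinearMap.range_domRestrict]
        exact (L.domRestrict W).finrank_range_add_finrank_ker
      obtain ⟨x, hx, hx'⟩ := exists_ne_zero_forall_dotProduct_eq_zero (W.map L ⊔ Ψ) (by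
        have := Submodule.finrank_add_le_finrank_add_finrank (W.map L) Ψ
        rw [Fintype.card_fin]
        omega)
      exact ⟨x, hx, fun B hB => hx' _ (Submodule.mem_sup_left ⟨B, hB, rfl⟩),
        fun ψ hψ => hx' _ (Submodule.mem_sup_right hψ)⟩
    · obtain ⟨x, hx, hx'⟩ := exists_ne_zero_forall_dotProduct_eq_zero (W.map L) (by
        have : finrank K (W.map L) ≤ finrank K W := Submodule.finrank_map_le _ _
        rw [Fintype.card_fin]
        omega)
      refine ⟨x, hx, fun B hB => hx' _ ⟨B, hB, rfl⟩, fun ψ hψ => ?_⟩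
      have h1 := hx' _ ⟨_, hψ, rfl⟩
      change φ ᵥ* vecMulVec p ψ ⬝ᵥ x = 0 at h1
      rw [vecMul_vecMulVec, smul_dotProduct, smul_eq_mul, mul_eq_zero] at h1
      exact h1.resolve_left h
  obtain ⟨x, hx0, hx, hψ⟩ := hx
  obtain ⟨A, hA, hA'⟩ := (representedByUnits K m).exists_mulVec_eq W 0 hp hx0
    (fun ψ h => (hψ ψ h).symm) (Or.inl (by omega))
  exact ⟨A, hA', by rwa [hA]⟩

/-- The products of elementary matrices `1 + tₖ E_{iₖ jₖ}` with arbitrary scalars `tₖ`, where the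
sequence of positions `(iₖ, jₖ)` is prescribed. -/
def transvectionProducts (K : Type*) [Field K] {ι : Type*} [Fintype ι] [DecidableEq ι] :
    List (ι × ι) → Set (Matrix ι ι K)
  | [] => {1}
  | a :: l => {M | ∃ t : K, ∃ N ∈ transvectionProducts K l, M = transvection a.1 a.2 t * N}

/-- A set of matrices is covered if it consists of products of elementary matrices along a common
sequence of positions. -/
def IsTransvectionCovered {K ι : Type*} [Field K] [Fintype ι] [DecidableEq ι]
    (s : Set (Matrix ι ι K)) : Prop :=
  ∃ l, s ⊆ transvectionProducts K l

section

variable {K ι : Type*} [Field K] [Fintype ι] [DecidableEq ι]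

theorem mul_mem_transvectionProducts {l l' : List (ι × ι)} {M N : Matrix ι ι K}
    (hM : M ∈ transvectionProducts K l) (hN : N ∈ transvectionProducts K l') :
    M * N ∈ transvectionProducts K (l ++ l') := by
  induction l generalizing M with
  | nil =>
    obtain rfl : M = 1 := hM
    simpa using hN
  | cons a l ih =>
    obtain ⟨t, M', hM', rfl⟩ := hM
    exact ⟨t, M' * N, ih hM', mul_assoc _ _ _⟩

open Pointwise in
theorem IsTransvectionCovered.mul {s s' : Set (Matrix ι ι K)} (hs : IsTransvectionCovered s)
    (hs' : IsTransvectionCovered s') : IsTransvectionCovered (s * s') := by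
  obtain ⟨l, hl⟩ := hs
  obtain ⟨l', hl'⟩ := hs'
  refine ⟨l ++ l', ?_⟩
  rintro _ ⟨M, hM, N, hN, rfl⟩
  exact mul_mem_transvectionProducts (hl hM) (hl' hN)

theorem IsTransvectionCovered.mono {s s' : Set (Matrix ι ι K)} (hs' : IsTransvectionCovered s')
    (h : s ⊆ s') : IsTransvectionCovered s :=
  hs'.imp fun _ hl => h.trans hl

theorem isTransvectionCovered_singleton_one :
    IsTransvectionCovered ({1} : Set (Matrix ι ι K)) :=
  ⟨[], subset_rfl⟩

theorem isTransvectionCovered_range_transvection (i j : ι) :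
    IsTransvectionCovered (Set.range (transvection i j : K → Matrix ι ι K)) := by
  refine ⟨[(i, j)], ?_⟩
  rintro _ ⟨t, rfl⟩
  exact ⟨t, 1, rfl, (mul_one _).symm⟩

theorem isTransvectionCovered_range_one_add_sum_single (r c : ι → ι) (s : Finset ι)
    (h : ∀ i ∈ s, ∀ j ∈ s, i ≠ j → c i ≠ r j) :
    IsTransvectionCovered
      (Set.range fun v : ι → K => (1 + ∑ i ∈ s, single (r i) (c i) (v i) : Matrix ι ι K)) := by
  induction s using Finset.induction_on with
  | empty => exact isTransvectionCovered_singleton_one.mono (by rintro _ ⟨v, rfl⟩; simp)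
  | insert a s ha ih =>
    refine ((isTransvectionCovered_range_transvection (r a) (c a)).mul (ih fun i hi j hj =>
      h i (Finset.mem_insert_of_mem hi) j (Finset.mem_insert_of_mem hj))).mono ?_
    rintro _ ⟨v, rfl⟩
    refine ⟨_, ⟨v a, rfl⟩, _, ⟨v, rfl⟩, ?_⟩
    have h0 : single (r a) (c a) (v a) * ∑ i ∈ s, single (r i) (c i) (v i) = 0 := by
      rw [Finset.mul_sum]
      refine Finset.sum_eq_zero fun i hi => single_mul_single_of_ne _ _ _ _ (h a
        (Finset.mem_insert_self _ _) i (Finset.mem_insert_of_mem hi) ?_) _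
      rintro rfl
      exact ha hi
    simp only [transvection, add_mul, mul_add, one_mul, mul_one, h0, Finset.sum_insert ha]
    abel

theorem isTransvectionCovered_column (k : ι) :
    IsTransvectionCovered
      {M : Matrix ι ι K | ∃ v : ι → K, v k = 0 ∧ M = 1 + vecMulVec v (Pi.single k 1)} := by
  refine (isTransvectionCovered_range_one_add_sum_single id (fun _ => k) (Finset.univ.erase k)
    fun i _ j hj _ => (Finset.ne_of_mem_erase hj).symm).mono ?_
  rintro _ ⟨v, hv, rfl⟩
  refine ⟨v, ?_⟩
  have h := Finset.sum_erase Finset.univ (f := fun i => single i k (v i)) (a := k) (by simp [hv])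
  simp only [id, h]
  congr 1
  ext i j
  simp [Matrix.sum_apply, single_apply, vecMulVec_apply, Pi.single_apply, ite_and, eq_comm]

theorem isTransvectionCovered_row (k : ι) :
    IsTransvectionCovered
      {M : Matrix ι ι K | ∃ v : ι → K, v k = 0 ∧ M = 1 + vecMulVec (Pi.single k 1) v} := by
  refine (isTransvectionCovered_range_one_add_sum_single (fun _ => k) id (Finset.univ.erase k)
    fun i hi j _ _ => Finset.ne_of_mem_erase hi).mono ?_
  rintro _ ⟨v, hv, rfl⟩
  refine ⟨v, ?_⟩
  have h := Finset.sum_erase Finset.univ (f := fun i => single k i (v i)) (a := k) (by simp [hv])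
  simp only [id, h]
  congr 1
  ext i j
  simp [Matrix.sum_apply, single_apply, vecMulVec_apply, Pi.single_apply, ite_and, eq_comm]

/-- The matrices which agree with the identity outside of the square block indexed by `u`. -/
def supportedOn (K : Type*) [Field K] {ι : Type*} [DecidableEq ι] (u : Finset ι) :
    Set (Matrix ι ι K) :=
  {M | ∀ i j, i ∉ u ∨ j ∉ u → M i j = (1 : Matrix ι ι K) i j}

open Pointwise in
theorem IsTransvectionCovered.supportedOn_insert_of_column {k : ι} {u : Finset ι}
    (hu : IsTransvectionCovered (supportedOn K u)) :
    IsTransvectionCovered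
      {M ∈ supportedOn K (insert k u) | ∀ i, M i k = (1 : Matrix ι ι K) i k} := by
  refine (hu.mul (isTransvectionCovered_row k)).mono ?_
  rintro M ⟨hM, hk⟩
  let v : ι → K := fun j => if j = k then 0 else M k j
  have hv : v k = 0 := if_pos rfl
  have hMk : M *ᵥ Pi.single k 1 = Pi.single k 1 := by
    ext i
    simp [hk, one_apply, Pi.single_apply]
  refine ⟨M - vecMulVec (Pi.single k 1) v, ?_, _, ⟨v, hv, rfl⟩, ?_⟩
  · intro i j hij
    have hM' := hM i j
    simp only [Finset.mem_insert, not_or] at hM'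
    simp only [Matrix.sub_apply, vecMulVec_apply, v, Pi.single_apply]
    by_cases hik : i = k
    · subst hik
      by_cases hjk : j = i
      · subst hjk
        simp [hk]
      · simp [hjk, one_apply, Ne.symm hjk]
    · by_cases hjk : j = k
      · subst hjk
        simp [hk]
      · simp only [hik, if_false, zero_mul, sub_zero]
        exact hM' (by tauto)
  · have h0 : vecMulVec (Pi.single k 1) v * vecMulVec (Pi.single k 1) v = 0 := by
      simp [vecMulVec_mul_vecMulVec, hv]
    simp only [mul_add, sub_mul, mul_one, h0]
    rw [mul_vecMulVec, hMk]
    simp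

open Pointwise in
theorem IsTransvectionCovered.supportedOn_insert {k : ι} {u : Finset ι}
    (hu : IsTransvectionCovered (supportedOn K u)) :
    IsTransvectionCovered (supportedOn K (insert k u)) := by
  have hX := hu.supportedOn_insert_of_column (k := k)
  refine (((((isTransvectionCovered_range_transvection k k).mul (isTransvectionCovered_row k)).mul
    (isTransvectionCovered_column k)).mul hX).mul
    (isTransvectionCovered_range_transvection k k)).mono ?_
  have hD : (1 : Matrix ι ι K) ∈ Set.range (transvection k k : K → Matrix ι ι K) :=
    ⟨0, transvection_zero _ _⟩
  have hR : (1 : Matrix ι ι K) ∈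
      {M : Matrix ι ι K | ∃ v : ι → K, v k = 0 ∧ M = 1 + vecMulVec (Pi.single k 1) v} :=
    ⟨0, rfl, by simp⟩
  have hC : (1 : Matrix ι ι K) ∈
      {M : Matrix ι ι K | ∃ v : ι → K, v k = 0 ∧ M = 1 + vecMulVec v (Pi.single k 1)} :=
    ⟨0, rfl, by simp⟩
  intro M hM
  have hM' : ∀ i j, (i ≠ k ∧ i ∉ u ∨ j ≠ k ∧ j ∉ u) → M i j = (1 : Matrix ι ι K) i j := by
    intro i j hij
    exact hM i j (by simpa using hij)
  by_cases hc : ∃ i, i ≠ k ∧ M i k ≠ 0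
  · obtain ⟨i, hik, hi⟩ := hc
    let t := (M k k - 1) / M i k
    let c : ι → K := fun a => if a = k then 0 else M a k
    have hck : c k = 0 := if_pos rfl
    have ht : t * M i k = M k k - 1 := div_mul_cancel₀ _ hi
    let Y := (1 - vecMulVec (Pi.single k 1) (Pi.single i t)) * M
    let Z := (1 - vecMulVec c (Pi.single k 1)) * Y
    have hiu : i ∈ u := by
      by_contra h
      exact hi (by rw [hM' i k (Or.inl ⟨hik, h⟩), one_apply_ne hik])
    have hY : ∀ a j, Y a j = M a j - if a = k then t * M i j else 0 := by
      intro a j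
      simp [Y, sub_mul, vecMulVec_mul, vecMulVec_apply, Pi.single_apply]
    have hZ : ∀ a j, Z a j = Y a j - c a * Y k j := by
      intro a j
      simp [Z, sub_mul, vecMulVec_mul, vecMulVec_apply]
    have hZY : Y = (1 + vecMulVec c (Pi.single k 1)) * Z := by
      have : vecMulVec c (Pi.single k 1) * vecMulVec c (Pi.single k 1) = 0 := by
        simp [vecMulVec_mul_vecMulVec, hck]
      simp only [Z]
      rw [← mul_assoc, add_mul, mul_sub, mul_sub, this]
      simp
    have hYM : M = (1 + vecMulVec (Pi.single k 1) (Pi.single i t)) * Y := by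
      have : vecMulVec (Pi.single k 1) (Pi.single i t) *
          vecMulVec (Pi.single k 1) (Pi.single i t) = 0 := by
        simp [vecMulVec_mul_vecMulVec, hik]
      simp only [Y]
      rw [← mul_assoc, add_mul, mul_sub, mul_sub, this]
      simp
    refine ⟨_, ⟨_, ⟨_, ⟨1, hD, _, ⟨Pi.single i t, by simp [hik.symm], rfl⟩, rfl⟩, _,
      ⟨c, hck, rfl⟩, rfl⟩, Z, ⟨?_, ?_⟩, rfl⟩, 1, hD, ?_⟩
    · intro a j haj
      simp only [Finset.mem_insert, not_or] at haj
      rw [← hM' a j haj, hZ, hY, hY]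
      rcases haj with ⟨hak, hau⟩ | ⟨hjk, hju⟩
      · simp [c, hak, hM' a k (Or.inl ⟨hak, hau⟩)]
      · have hji : i ≠ j := by
          rintro rfl
          exact hju hiu
        simp [hM' i j (Or.inr ⟨hjk, hju⟩), hM' k j (Or.inr ⟨hjk, hju⟩), hji,
          one_apply_ne (Ne.symm hjk)]
    · intro a
      rw [hZ, hY, hY]
      by_cases hak : a = k
      · subst hak
        simp [hck, ht]
      · simp [hak, c, ht]
    · simp only [one_mul, mul_one]
      rw [mul_assoc, ← hZY, ← hYM]
  · push Not at hc
    by_cases hk : M k k = 0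
    · refine ⟨_, ⟨_, ⟨_, ⟨1, hD, 1, hR, rfl⟩, 1, hC, rfl⟩, M + single k k 1, ⟨?_, ?_⟩, rfl⟩,
        transvection k k (-1), ⟨_, rfl⟩, ?_⟩
      · intro a j haj
        simp only [Finset.mem_insert, not_or] at haj
        rw [← hM' a j haj, Matrix.add_apply, single_apply_of_ne, add_zero]
        rintro ⟨rfl, rfl⟩
        tauto
      · intro a
        by_cases hak : a = k
        · subst hak
          simp [hk]
        · simp [hak, hc, Ne.symm hak]
      · have h0 : M * single k k (-1) = 0 := by
          ext a j
          by_cases hak : a = k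
          · subst hak
            by_cases hj : j = a
            · subst hj; simp [hk]
            · simp [hj]
          · by_cases hj : j = k
            · subst hj; simp [hc, hak]
            · simp [hj]
        simp only [one_mul, transvection, add_mul, mul_add, h0, mul_one, single_mul_single_same]
        simp [← single_neg]
    · have hdiag : ∀ t a j,
          (transvection k k t * M) a j = M a j + if a = k then t * M k j else 0 := by
        intro t a j
        by_cases hak : a = k
        · subst hak
          simp [transvection, add_mul]
        · simp [transvection, add_mul, hak]
      refine ⟨_, ⟨_, ⟨_, ⟨transvection k k (M k k - 1), ⟨_, rfl⟩, 1, hR, rfl⟩, 1, hC, rfl⟩,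
        transvection k k ((M k k)⁻¹ - 1) * M, ⟨?_, ?_⟩, rfl⟩, 1, hD, ?_⟩
      · intro a j haj
        simp only [Finset.mem_insert, not_or] at haj
        rw [← hM' a j haj, hdiag]
        by_cases hak : a = k
        · subst hak
          rw [hM' a j haj, one_apply_ne (by tauto)]
          simp
        · simp [hak]
      · intro a
        rw [hdiag]
        by_cases hak : a = k
        · subst hak
          simp [sub_mul, hk]
        · simp [hak, hc]
      · simp only [mul_one]
        rw [← mul_assoc]
        have : transvection k k (M k k - 1) * transvection k k ((M k k)⁻¹ - 1) = 1 := by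
          simp only [transvection, add_mul, mul_add, one_mul, mul_one, single_mul_single_same]
          rw [add_assoc, ← single_add, ← single_add]
          convert add_zero (1 : Matrix ι ι K)
          convert single_zero k k
          field_simp
          ring
        rw [this, one_mul]

theorem exists_transvectionProducts_eq_univ :
    ∃ l : List (ι × ι), transvectionProducts K l = Set.univ := by
  have h : ∀ u : Finset ι, IsTransvectionCovered (supportedOn K u) := by
    intro u
    induction u using Finset.induction_on with
    | empty =>
      refine isTransvectionCovered_singleton_one.mono fun M hM => ?_
      ext i j
      exact hM i j (by simp)
    | insert k u _ ih => exact ih.supportedOn_insert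
  obtain ⟨l, hl⟩ := h Finset.univ
  exact ⟨l, Set.eq_univ_of_forall fun M => hl fun i j hij => by simp at hij⟩

end

theorem exists_traceOrthogonal {K ι : Type*} [Field K] [Fintype ι] [DecidableEq ι]
    (V : Submodule K (Matrix ι ι K)) :
    ∃ W : Submodule K (Matrix ι ι K),
      finrank K W + finrank K V ≤ Fintype.card ι ^ 2 ∧
      ∀ A, (∀ B ∈ W, (A * B).trace = 0) → A ∈ V := by
  let T : Matrix ι ι K →ₗ[K] Dual K (Matrix ι ι K) :=
    (LinearMap.mul K (Matrix ι ι K)).flip.compr₂ (traceLinearMap ι K K)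
  have hT : ∀ B A, T B A = (A * B).trace := fun _ _ => rfl
  have hinj : Function.Injective T := fun B B' h =>
    ext_iff_trace_mul_left.2 fun A => LinearMap.congr_fun h A
  have hsurj : Function.Surjective T :=
    (LinearMap.injective_iff_surjective_of_finrank_eq_finrank
      (Subspace.dual_finrank_eq (K := K)).symm).1 hinj
  refine ⟨V.dualAnnihilator.comap T, ?_, fun A hA => ?_⟩
  · have h1 := Subspace.finrank_add_finrank_dualAnnihilator_eq V
    rw [finrank_matrix, finrank_self, mul_one, ← sq] at h1
    rw [(Submodule.equivMapOfInjective T hinj _).finrank_eq, ← h1, add_comm]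
    exact Nat.add_le_add_left (Submodule.finrank_mono (Submodule.map_comap_le _ _)) _
  · refine (Subspace.forall_mem_dualAnnihilator_apply_eq_zero_iff V A).1 fun f hf => ?_
    obtain ⟨B, rfl⟩ := hsurj f
    exact hA B hf

theorem exists_unit_mem_mul_one_add_vecMulVec_mem {K : Type*} [Field K] {n : ℕ}
    (V : Submodule K (Matrix (Fin n) (Fin n) K)) (hV : n ^ 2 + 2 ≤ n + finrank K V)
    {p : Fin n → K} (hp : p ≠ 0) (φ : Fin n → K) :
    ∃ A : (Matrix (Fin n) (Fin n) K)ˣ,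
      A.val ∈ V ∧ ∀ t : K, A.val * (1 + t • vecMulVec p φ) ∈ V := by
  obtain ⟨W, hW, hWV⟩ := exists_traceOrthogonal V
  rw [Fintype.card_fin] at hW
  obtain ⟨A, hA, hA'⟩ := exists_unit_orthogonal_dotProduct_mulVec_eq_zero W (by omega) hp φ
  refine ⟨A, hWV _ hA, fun t => ?_⟩
  rw [mul_add, mul_one, mul_smul_comm, mul_vecMulVec]
  refine V.add_mem (hWV _ hA) (V.smul_mem t (hWV _ fun B hB => ?_))
  rw [vecMulVec_mul, trace_vecMulVec, dotProduct_comm, hA' B hB]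

theorem exists_unit_mul_mem_closure {K : Type*} [Field K] {n : ℕ}
    (V : Submodule K (Matrix (Fin n) (Fin n) K)) (hV : n ^ 2 + 2 ≤ n + finrank K V)
    (l : List (Fin n × Fin n)) :
    ∃ g : (Matrix (Fin n) (Fin n) K)ˣ, ∀ M ∈ transvectionProducts K l,
      g.val * M ∈ Submonoid.closure (V : Set (Matrix (Fin n) (Fin n) K)) := by
  induction l with
  | nil =>
    refine ⟨1, fun M hM => ?_⟩
    rw [show M = 1 from hM, Units.val_one, one_mul]
    exact one_mem _
  | cons a l ih =>
    obtain ⟨g, hg⟩ := ih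
    have hp : g.val *ᵥ Pi.single a.1 1 ≠ 0 := by
      intro h
      have h' := congrArg (g⁻¹.val *ᵥ ·) h
      simp only [mulVec_mulVec, Units.inv_mul, one_mulVec, mulVec_zero] at h'
      simp at h'
    obtain ⟨A, -, hA⟩ :=
      exists_unit_mem_mul_one_add_vecMulVec_mem V hV hp (Pi.single a.2 1 ᵥ* g⁻¹.val)
    refine ⟨A * g, ?_⟩
    rintro _ ⟨t, M, hM, rfl⟩
    have h : (A * g).val * (transvection a.1 a.2 t * M) = A.val * (1 + t • vecMulVec
        (g.val *ᵥ Pi.single a.1 1) (Pi.single a.2 1 ᵥ* g⁻¹.val)) * (g.val * M) := by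
      have ht : transvection a.1 a.2 t =
          1 + t • vecMulVec (Pi.single a.1 1) (Pi.single a.2 (1 : K)) := by
        rw [transvection, ← single_eq_single_vecMulVec_single, smul_single, smul_eq_mul, mul_one]
      rw [ht, ← mul_vecMulVec, ← vecMulVec_mul]
      simp [mul_add, add_mul, mul_assoc]
    rw [h]
    exact mul_mem (Submonoid.subset_closure (hA t)) (hg M hM)

theorem subspace_generates_semigroup (K : Type*) [Field K] (n : ℕ) (hn : 0 < n)
    (V : Submodule K (Matrix (Fin n) (Fin n) K))
    (hV : n ^ 2 - Module.finrank K V < n - 1) (M : Matrix (Fin n) (Fin n) K) :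
    ∃ l : List (Matrix (Fin n) (Fin n) K), l ≠ [] ∧ (∀ A ∈ l, A ∈ V) ∧ l.prod = M := by
  have hV' : n ^ 2 + 2 ≤ n + Module.finrank K V := by omega
  obtain ⟨l, hl⟩ := exists_transvectionProducts_eq_univ (K := K) (ι := Fin n)
  obtain ⟨g, hg⟩ := exists_unit_mul_mem_closure V hV' l
  obtain ⟨A, hA, -⟩ := exists_unit_mem_mul_one_add_vecMulVec_mem V hV'
    (p := Pi.single ⟨0, hn⟩ 1) (by simp) 0
  have hmem := hg (g⁻¹.val * (A⁻¹.val * M)) (hl ▸ Set.mem_univ _)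
  rw [Units.mul_inv_cancel_left] at hmem
  obtain ⟨L, hL, hprod⟩ := Submonoid.exists_list_of_mem_closure hmem
  refine ⟨A.val :: L, List.cons_ne_nil _ _, ?_, ?_⟩
  · exact List.forall_mem_cons.2 ⟨hA, hL⟩
  · rw [List.prod_cons, hprod, Units.mul_inv_cancel_left]
end

section
/- Let K be a field, n ≥ 1, and let 𝒱 be an affine subspace of M_n(K) with codimension strictly less than n-1. Then every matrix of M_n(K) is a finite product of matrices belonging to 𝒱. -/
open Module

namespace LinearMap

variable {K E F E' F' : Type*} [Field K] [AddCommGroup E] [Module K E] [AddCommGroup F] [Module K F]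
  [AddCommGroup E'] [Module K E'] [AddCommGroup F'] [Module K F']

/-- Evaluation at `x` maps the space of operators `V` onto the whole codomain. -/
def EvaluatesOntoAt (V : Submodule K (E →ₗ[K] F)) (x : E) : Prop :=
  ∀ y, ∃ A ∈ V, A x = y

theorem finrank_map_add_finrank_inf_ker [FiniteDimensional K E] (f : E →ₗ[K] F)
    (V : Submodule K E) :
    finrank K (V.map f) + finrank K (V ⊓ ker f : Submodule K E) = finrank K V := by
  rw [← finrank_range_add_finrank_ker (f.domRestrict V), range_domRestrict, ker_domRestrict,
    ← Submodule.map_comap_subtype]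
  congr 1
  exact Submodule.finrank_map_subtype_eq V _

theorem span_not_evaluatesOntoAt_ne_top [FiniteDimensional K E] [FiniteDimensional K F]
    (V : Submodule K (E →ₗ[K] F))
    (hV : finrank K (E →ₗ[K] F) < finrank K V + finrank K E) :
    Submodule.span K {x | ¬ EvaluatesOntoAt V x} ≠ ⊤ := by
  intro h
  let b := Basis.ofSpan h.ge
  have hb : ∀ i, ∃ φ : Dual K F, φ ≠ 0 ∧ ∀ A ∈ V, φ (A (b i)) = 0 := by
    intro i
    have hi : ¬ EvaluatesOntoAt V (b i) := Basis.ofSpan_subset h.ge ⟨i, rfl⟩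
    have hlt : V.map (applyₗ (b i)) < ⊤ := by
      refine lt_top_iff_ne_top.2 fun htop ↦ hi fun y ↦ ?_
      have : y ∈ V.map (applyₗ (b i)) := htop ▸ Submodule.mem_top
      simpa using this
    obtain ⟨φ, h0, hφ⟩ := Submodule.exists_le_ker_of_lt_top _ hlt
    exact ⟨φ, h0, fun A hA ↦ hφ ⟨A, hA, rfl⟩⟩
  choose φ hφ0 hφ using hb
  have := FiniteDimensional.fintypeBasisIndex b
  let Ψ : (E →ₗ[K] F) →ₗ[K] (_ → K) := LinearMap.pi fun i ↦ φ i ∘ₗ applyₗ (b i)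
  have hΨ : range Ψ = ⊤ := by
    refine range_eq_top.2 fun c ↦ ?_
    have : ∀ i, ∃ y, φ i y = c i := fun i ↦ LinearMap.surjective (hφ0 i) _
    choose y hy using this
    refine ⟨b.constr K y, ?_⟩
    ext i
    rw [← hy i]
    exact congrArg (φ i) (b.constr_basis K y i)
  have hker : V ≤ ker Ψ := fun A hA ↦ by
    ext i
    simp [Ψ, hφ i A hA]
  have h1 := finrank_range_add_finrank_ker Ψ
  have h2 := Submodule.finrank_mono hker
  rw [hΨ, finrank_top, finrank_fintype_fun_eq_card, ← finrank_eq_card_basis b] at h1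
  omega

theorem exists_evaluatesOntoAt [FiniteDimensional K E] [FiniteDimensional K F]
    (V : Submodule K (E →ₗ[K] F))
    (hV : finrank K (E →ₗ[K] F) < finrank K V + finrank K E) :
    ∃ x, x ≠ 0 ∧ EvaluatesOntoAt V x := by
  obtain ⟨x, hx⟩ : ∃ x, x ∉ Submodule.span K {x | ¬ EvaluatesOntoAt V x} := by
    by_contra! h
    exact span_not_evaluatesOntoAt_ne_top V hV (eq_top_iff.2 fun x _ ↦ h x)
  refine ⟨x, fun h ↦ hx (h ▸ Submodule.zero_mem _), ?_⟩
  by_contra h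
  exact hx (Submodule.subset_span h)

/-- The linear form `ℓ` is sent to the operator `v ↦ ℓ (π v) • y`. -/
def rankOneMap (π : E →ₗ[K] E') (y : F) : Dual K E' →ₗ[K] E →ₗ[K] F where
  toFun ℓ := (ℓ ∘ₗ π).smulRight y
  map_add' ℓ ℓ' := by ext; simp [add_smul]
  map_smul' c ℓ := by ext; simp [mul_smul]

@[simp]
theorem rankOneMap_apply (π : E →ₗ[K] E') (y : F) (ℓ : Dual K E') (v : E) :
    rankOneMap π y ℓ v = ℓ (π v) • y := rfl

/-- The linear forms `ℓ` for which the operator `v ↦ ℓ (π v) • y` lies in `V`. -/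
def rankOneForms (π : E →ₗ[K] E') (y : F) (V : Submodule K (E →ₗ[K] F)) :
    Submodule K (Dual K E') :=
  V.comap (rankOneMap π y)

theorem apply_rightInverse_of_ker_eq_span {π : E →ₗ[K] E'} {s : E' →ₗ[K] E} {x : E}
    (hs : π ∘ₗ s = .id) (hπx : ker π = Submodule.span K {x})
    {A : E →ₗ[K] F} (hA : A x = 0) (v : E) : A (s (π v)) = A v := by
  have hv : s (π v) - v ∈ ker π := by
    rw [mem_ker, map_sub, sub_eq_zero]
    exact congr($hs (π v))
  rw [hπx, Submodule.mem_span_singleton] at hv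
  obtain ⟨c, hc⟩ := hv
  rw [← sub_eq_zero, ← map_sub, ← hc, map_smul, hA, smul_zero]

theorem exists_rankOneForms_ne_top [FiniteDimensional K E'] {V : Submodule K (E →ₗ[K] F)} {x : E}
    {π : E →ₗ[K] E'} (hV : V ≠ ⊤) (hx : EvaluatesOntoAt V x) (hπ : Function.Surjective π)
    (hπx : ker π = Submodule.span K {x}) {U : Submodule K F} (hU : U ≠ ⊤) :
    ∃ y, y ∉ U ∧ rankOneForms π y V ≠ ⊤ := by
  by_contra! h
  apply hV
  obtain ⟨s, hs⟩ := π.exists_rightInverse_of_surjective (range_eq_top.2 hπ)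
  have h1 : ∀ y ∉ U, ∀ ℓ, rankOneMap π y ℓ ∈ V := fun y hy ℓ ↦ by
    have : ℓ ∈ rankOneForms π y V := h y hy ▸ Submodule.mem_top
    exact this
  have h2 : ∀ y, ∀ ℓ, rankOneMap π y ℓ ∈ V := fun y ℓ ↦ by
    by_cases hy : y ∈ U
    · obtain ⟨z, hz⟩ : ∃ z, z ∉ U := by
        by_contra! hc
        exact hU (eq_top_iff.2 fun z _ ↦ hc z)
      have hyz : y + z ∉ U := fun hc ↦ hz ((Submodule.add_mem_iff_right U hy).1 hc)
      have : rankOneMap π y ℓ = rankOneMap π (y + z) ℓ - rankOneMap π z ℓ := by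
        ext v
        simp
      rw [this]
      exact sub_mem (h1 _ hyz ℓ) (h1 _ hz ℓ)
    · exact h1 y hy ℓ
  have h3 : ∀ A : E →ₗ[K] F, A x = 0 → A ∈ V := fun A hA ↦ by
    let b := finBasis K E'
    have : A = ∑ i, rankOneMap π (A (s (b i))) (b.coord i) := by
      ext v
      rw [← apply_rightInverse_of_ker_eq_span hs hπx hA v]
      conv_lhs => rw [← b.sum_repr (π v)]
      simp only [map_sum, map_smul, sum_apply, rankOneMap_apply, Basis.coord_apply]
    rw [this]
    exact sum_mem fun i _ ↦ h2 _ _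
  refine eq_top_iff.2 fun A _ ↦ ?_
  obtain ⟨B, hB, hBx⟩ := hx (A x)
  rw [← sub_add_cancel A B]
  exact add_mem (h3 _ (by simp [hBx])) hB

/-- The affine space `{A | A - X ∈ V ∧ A x = y}` induces an affine space of operators between
quotients by `x` and `y`, whose dimension is bounded from below. -/
theorem exists_induced_affine [FiniteDimensional K E] [FiniteDimensional K F]
    [FiniteDimensional K E'] [FiniteDimensional K F']
    {V : Submodule K (E →ₗ[K] F)} (X : E →ₗ[K] F) {x : E} {y : F}
    {π : E →ₗ[K] E'} {ρ : F →ₗ[K] F'} (hx : EvaluatesOntoAt V x)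
    (hπ : Function.Surjective π) (hπx : ker π = Submodule.span K {x})
    (hρy : ker ρ = Submodule.span K {y}) :
    ∃ (X' : E' →ₗ[K] F') (V' : Submodule K (E' →ₗ[K] F')),
      (∀ N, N - X' ∈ V' → ∃ A, A - X ∈ V ∧ A x = y ∧ ρ ∘ₗ A = N ∘ₗ π) ∧
      finrank K V ≤ finrank K F + finrank K (rankOneForms π y V) + finrank K V' := by
  obtain ⟨s, hs⟩ := π.exists_rightInverse_of_surjective (range_eq_top.2 hπ)
  have hρ0 : ρ y = 0 := by
    rw [← mem_ker, hρy]
    exact Submodule.mem_span_singleton_self y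
  let Φ : (E →ₗ[K] F) →ₗ[K] E' →ₗ[K] F' := compRight K ρ ∘ₗ lcomp K F s
  obtain ⟨W, hW⟩ : ∃ W : Submodule K (E →ₗ[K] F), W = V ⊓ ker (applyₗ x) := ⟨_, rfl⟩
  obtain ⟨A₀, hA₀, hA₀x⟩ := hx (y - X x)
  have key : ∀ A : E →ₗ[K] F, ρ (A x) = 0 → ρ ∘ₗ A = Φ A ∘ₗ π := fun A hA ↦ by
    ext v
    exact (apply_rightInverse_of_ker_eq_span (A := ρ ∘ₗ A) hs hπx hA v).symm
  refine ⟨Φ (X + A₀), W.map Φ, ?_, ?_⟩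
  · rintro N ⟨B, hBW, hBN⟩
    obtain ⟨hB, hBx⟩ := hW ▸ hBW
    replace hBx : B x = 0 := hBx
    have hy : (X + A₀ + B) x = y := by simp [hA₀x, hBx]
    refine ⟨X + A₀ + B, ?_, hy, ?_⟩
    · rw [add_assoc, add_sub_cancel_left]
      exact add_mem hA₀ hB
    · rw [key _ (by rw [hy, hρ0]), map_add, hBN, add_sub_cancel]
  · have h1 := finrank_map_add_finrank_inf_ker (applyₗ x : (E →ₗ[K] F) →ₗ[K] F) V
    rw [← hW] at h1
    have h2 := finrank_map_add_finrank_inf_ker Φ W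
    have h3 : W ⊓ ker Φ ≤ (rankOneForms π y V).map (rankOneMap π y) := by
      rintro A ⟨hAW, hAΦ⟩
      obtain ⟨hAV, hAx⟩ := hW ▸ hAW
      replace hAx : A x = 0 := hAx
      have hρA : ∀ v, A v ∈ Submodule.span K {y} := fun v ↦ by
        rw [← hρy, mem_ker]
        have := congr($(key A (by rw [hAx, map_zero])) v)
        rw [mem_ker.1 hAΦ] at this
        exact this
      have hc : ∀ i, ∃ c : K, c • y = A (s (finBasis K E' i)) := fun i ↦
        Submodule.mem_span_singleton.1 (hρA _)
      choose c hc using hc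
      have : rankOneMap π y ((finBasis K E').constr K c) = A := by
        have h : ((finBasis K E').constr K c).smulRight y = A ∘ₗ s :=
          (finBasis K E').ext fun i ↦ by simp [hc]
        ext v
        rw [← apply_rightInverse_of_ker_eq_span hs hπx hAx v]
        exact congr($h (π v))
      refine ⟨_, ?_, this⟩
      change _ ∈ V
      rwa [this]
    have h4 := Submodule.finrank_mono h3
    have h5 := Submodule.finrank_map_le (rankOneMap π y) (rankOneForms π y V)
    have h6 := Submodule.finrank_le (V.map (applyₗ x : (E →ₗ[K] F) →ₗ[K] F))
    omega

theorem finrank_of_surjective_of_ker_eq_span [FiniteDimensional K E] {π : E →ₗ[K] E'} {x : E}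
    (hπ : Function.Surjective π) (hπx : ker π = Submodule.span K {x}) (hx : x ≠ 0) :
    finrank K E = finrank K E' + 1 := by
  rw [← finrank_range_add_finrank_ker π, hπx, finrank_span_singleton hx,
    range_eq_top.2 hπ, finrank_top]

theorem injective_of_induced_injective {π : E →ₗ[K] E'} {ρ : F →ₗ[K] F'} {x : E} {y : F}
    (hπx : ker π = Submodule.span K {x}) (hy : y ≠ 0) {A : E →ₗ[K] F} {N : E' →ₗ[K] F'}
    (hA : A x = y) (hAN : ρ ∘ₗ A = N ∘ₗ π) (hN : Function.Injective N) :
    Function.Injective A := by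
  refine (injective_iff_map_eq_zero A).2 fun v hv ↦ ?_
  have hv' : v ∈ ker π := by
    refine hN ?_
    have := congr($hAN v)
    simp only [comp_apply, hv, map_zero] at this ⊢
    exact this.symm
  rw [hπx, Submodule.mem_span_singleton] at hv'
  obtain ⟨c, rfl⟩ := hv'
  rw [map_smul, hA, smul_eq_zero_iff_left hy] at hv
  rw [hv, zero_smul]

theorem exists_injective_of_codim_lt {n : ℕ} {E : Type*} {F : Type*} [AddCommGroup E]
    [Module K E] [AddCommGroup F] [Module K F] [FiniteDimensional K E] [FiniteDimensional K F]
    (hE : finrank K E = n) (hF : finrank K F = n)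
    (V : Submodule K (E →ₗ[K] F)) (X : E →ₗ[K] F) (hV : n * n < finrank K V + n) :
    ∃ A : E →ₗ[K] F, A - X ∈ V ∧ Function.Injective A := by
  induction n generalizing E F with
  | zero =>
    have := finrank_zero_iff.1 hE
    exact ⟨X, by simp, Function.injective_of_subsingleton _⟩
  | succ n ih =>
    by_cases hVtop : V = ⊤
    · exact ⟨LinearEquiv.ofFinrankEq E F (hE.trans hF.symm), hVtop ▸ Submodule.mem_top,
        LinearEquiv.injective _⟩
    obtain ⟨x, hx0, hx⟩ := exists_evaluatesOntoAt V (by rw [finrank_linearMap, hE, hF]; exact hV)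
    have hπ := (Submodule.span K {x}).mkQ_surjective
    have hπx := (Submodule.span K {x}).ker_mkQ
    have : Nontrivial F := nontrivial_of_finrank_pos (R := K) (by omega)
    obtain ⟨y, hy0, hy⟩ :=
      exists_rankOneForms_ne_top hVtop hx hπ hπx (bot_ne_top (α := Submodule K F))
    rw [Submodule.mem_bot] at hy0
    have hρ := (Submodule.span K {y}).mkQ_surjective
    have hρy := (Submodule.span K {y}).ker_mkQ
    obtain ⟨X', V', h, hdim⟩ := exists_induced_affine X hx hπ hπx hρy
    have hE' := finrank_of_surjective_of_ker_eq_span hπ hπx hx0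
    have hF' := finrank_of_surjective_of_ker_eq_span hρ hρy hy0
    have hL := Submodule.finrank_lt hy
    rw [Subspace.dual_finrank_eq] at hL
    have hn : (n + 1) * (n + 1) = n * n + 2 * n + 1 := by ring
    obtain ⟨N, hN, hNi⟩ := ih (by omega) (by omega) V' X' (by omega)
    obtain ⟨A, hA, hAx, hAN⟩ := h N hN
    exact ⟨A, hA, injective_of_induced_injective hπx hy0 hAx hAN hNi⟩

theorem exists_injective_apply_eq {n : ℕ} [FiniteDimensional K E] [FiniteDimensional K F]
    (hE : finrank K E = n + 1) (hF : finrank K F = n + 1) {V : Submodule K (E →ₗ[K] F)}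
    (X : E →ₗ[K] F) (hV : (n + 1) * (n + 1) < finrank K V + n) {x : E} {y : F}
    (hx0 : x ≠ 0) (hx : EvaluatesOntoAt V x) (hy0 : y ≠ 0) :
    ∃ A : E →ₗ[K] F, A - X ∈ V ∧ A x = y ∧ Function.Injective A := by
  have hπ := (Submodule.span K {x}).mkQ_surjective
  have hπx := (Submodule.span K {x}).ker_mkQ
  have hρ := (Submodule.span K {y}).mkQ_surjective
  have hρy := (Submodule.span K {y}).ker_mkQ
  obtain ⟨X', V', h, hdim⟩ := exists_induced_affine X hx hπ hπx hρy
  have hE' := finrank_of_surjective_of_ker_eq_span hπ hπx hx0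
  have hF' := finrank_of_surjective_of_ker_eq_span hρ hρy hy0
  have hL := Submodule.finrank_le (rankOneForms (Submodule.span K {x}).mkQ y V)
  rw [Subspace.dual_finrank_eq] at hL
  have hn : (n + 1) * (n + 1) = n * n + 2 * n + 1 := by ring
  obtain ⟨N, hN, hNi⟩ :=
    exists_injective_of_codim_lt (n := n) (by omega) (by omega) V' X' (by omega)
  obtain ⟨A, hA, hAx, hAN⟩ := h N hN
  exact ⟨A, hA, hAx, injective_of_induced_injective hπx hy0 hAx hAN hNi⟩

theorem exists_eq_add_rankOneMap {π : E →ₗ[K] E'} {x : E} (hπ : Function.Surjective π)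
    (hπx : ker π = Submodule.span K {x}) (hx : x ≠ 0) {A B : Module.End K E} (hAB : A x = B x)
    (hπAB : π ∘ₗ A = π ∘ₗ B) : ∃ ℓ, A = B + rankOneMap π x ℓ := by
  obtain ⟨s, hs⟩ := π.exists_rightInverse_of_surjective (range_eq_top.2 hπ)
  obtain ⟨φ, hφ⟩ : ∃ φ : Dual K E, φ x = 1 := by
    obtain ⟨φ, hφ⟩ := not_forall.1 (mt (forall_dual_apply_eq_zero_iff K x).1 hx)
    exact ⟨(φ x)⁻¹ • φ, by simp [hφ]⟩
  refine ⟨φ ∘ₗ (A - B) ∘ₗ s, ?_⟩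
  ext v
  have hv : (A - B) v ∈ ker π := by
    rw [mem_ker, sub_apply, map_sub, sub_eq_zero]
    exact congr($hπAB v)
  rw [hπx, Submodule.mem_span_singleton] at hv
  obtain ⟨c, hc⟩ := hv
  have h := apply_rightInverse_of_ker_eq_span hs hπx (A := A - B) (by simp [hAB]) v
  rw [add_apply, rankOneMap_apply, comp_apply, comp_apply, h, ← hc, map_smul, hφ, smul_eq_mul,
    mul_one, hc, sub_apply, add_sub_cancel]

theorem exists_leftInverse_smul_comp_eq {φ : Dual K E} (hφ : φ ≠ 0) (ψ : Dual K E) :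
    ∃ (P Q : Module.End K E) (c : K), P * Q = 1 ∧ c • φ ∘ₗ Q = ψ := by
  by_cases hψ : ψ ∈ Submodule.span K {φ}
  · obtain ⟨c, hc⟩ := Submodule.mem_span_singleton.1 hψ
    exact ⟨1, 1, c, one_mul 1, hc⟩
  obtain ⟨v, hv, hφv⟩ : ∃ v, (ψ - φ) v = 0 ∧ φ v ≠ 0 := by
    by_contra! h
    have hmem : φ ∈ Submodule.span K (Set.range fun _ : Unit ↦ ψ - φ) :=
      mem_span_of_iInf_ker_le_ker fun v hv ↦ h v (by simpa using hv)
    rw [Set.range_const, Submodule.mem_span_singleton] at hmem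
    obtain ⟨a, ha⟩ := hmem
    have ha0 : a ≠ 0 := by
      rintro rfl
      exact hφ (by rw [← ha, zero_smul])
    refine hψ (Submodule.mem_span_singleton.2 ⟨1 + a⁻¹, ?_⟩)
    rw [add_smul, one_smul]
    nth_rw 2 [← ha]
    rw [inv_smul_smul₀ ha0, add_sub_cancel]
  have htransv : ∀ (χ : Dual K E) (u : E), χ u = 0 →
      (1 - χ.smulRight u) * (1 + χ.smulRight u) = (1 : Module.End K E) := fun χ u h ↦ by
    ext w
    simp [h]
  refine ⟨_, _, 1, htransv (ψ - φ) ((φ v)⁻¹ • v) (by rw [map_smul, hv, smul_zero]), ?_⟩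
  ext w
  simp [hφv]

section Subsemigroup

variable {S : Subsemigroup (Module.End K E)} {π : E →ₗ[K] E'} {x : E}

theorem mem_subsemigroup_of_apply_eq_self [FiniteDimensional K E']
    (hπ : Function.Surjective π) (hπx : ker π = Submodule.span K {x}) (hx : x ≠ 0)
    {ℓ₀ : Dual K E'} (hℓ₀ : ℓ₀ ≠ 0)
    (hS : ∀ N : Module.End K E', ∃ T : Module.End K E, T x = x ∧ π ∘ₗ T = N ∘ₗ π ∧
      ∀ t : K, T + t • rankOneMap π x ℓ₀ ∈ S)
    {T : Module.End K E} (hT : T x = x) : T ∈ S := by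
  have hπ0 : π x = 0 := by
    rw [← mem_ker, hπx]
    exact Submodule.mem_span_singleton_self x
  have hline : ∀ w : Dual K E', ∃ b, ∀ t : K, 1 + rankOneMap π x (b + t • w) ∈ S := fun w ↦ by
    obtain ⟨P, Q, c, hPQ, hw⟩ := exists_leftInverse_smul_comp_eq hℓ₀ w
    obtain ⟨A, hAx, hAP, hA⟩ := hS P
    obtain ⟨B, hBx, hBQ, hB⟩ := hS Q
    obtain ⟨b, hb⟩ := exists_eq_add_rankOneMap hπ hπx hx (A := A * B) (B := 1)
      (by simp [hAx, hBx]) (by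
        ext v
        have h1 := congr($hAP (B v))
        have h2 := congr($hBQ v)
        have h3 := congr($hPQ (π v))
        simp only [comp_apply, Module.End.mul_apply, Module.End.one_apply] at h1 h2 h3 ⊢
        rw [h1, h2, h3])
    refine ⟨b, fun t ↦ ?_⟩
    have hmem := S.mul_mem (hA (t * c)) (hB 0)
    convert hmem using 1
    rw [zero_smul, add_zero, map_add, ← add_assoc, ← hb, add_mul]
    congr 1
    ext v
    have h2 := congr($hBQ v)
    have h3 := congr($hw (π v))
    simp only [comp_apply, smul_apply, smul_eq_mul] at h2 h3
    simp only [map_smul, smul_apply, Module.End.mul_apply, rankOneMap_apply, h2, ← h3, smul_smul,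
      mul_assoc]
  have hsub : ∀ U : Submodule K (Dual K E'), U.FG →
      ∃ b, ∀ u ∈ U, 1 + rankOneMap π x (b + u) ∈ S := fun U hU ↦ by
    induction U, hU using Submodule.fg_induction with
    | singleton w =>
      obtain ⟨b, hb⟩ := hline w
      refine ⟨b, fun u hu ↦ ?_⟩
      obtain ⟨t, rfl⟩ := Submodule.mem_span_singleton.1 hu
      exact hb t
    | sup U₁ U₂ _ _ h₁ h₂ =>
      obtain ⟨b₁, hb₁⟩ := h₁
      obtain ⟨b₂, hb₂⟩ := h₂
      refine ⟨b₁ + b₂, fun u hu ↦ ?_⟩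
      obtain ⟨u₁, hu₁, u₂, hu₂, rfl⟩ := Submodule.mem_sup.1 hu
      convert S.mul_mem (hb₁ u₁ hu₁) (hb₂ u₂ hu₂) using 1
      ext v
      simp only [add_apply, Module.End.mul_apply, Module.End.one_apply, rankOneMap_apply, map_add,
        map_smul, hπ0, map_zero, zero_smul, add_zero, add_apply]
      abel
  obtain ⟨b, hb⟩ := hsub ⊤ (Module.finite_def.1 inferInstance)
  obtain ⟨s, hs⟩ := π.exists_rightInverse_of_surjective (range_eq_top.2 hπ)
  obtain ⟨A, hAx, hAT, hA⟩ := hS (π ∘ₗ T ∘ₗ s)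
  obtain ⟨ℓ, hℓ⟩ := exists_eq_add_rankOneMap hπ hπx hx (A := T) (B := A) (hT.trans hAx.symm) (by
    rw [hAT]
    ext v
    exact (apply_rightInverse_of_ker_eq_span hs hπx (A := π ∘ₗ T) (by simp [hT, hπ0]) v).symm)
  convert S.mul_mem (hA 0) (hb (ℓ - b) Submodule.mem_top) using 1
  rw [hℓ]
  ext v
  simp [hAx]

theorem subsemigroup_eq_top [FiniteDimensional K E] (hx : x ≠ 0) (hE : 1 < finrank K E)
    (hS : ∀ T : Module.End K E, T x = x → T ∈ S)
    (hS' : ∀ y, y ≠ 0 → ∃ A ∈ S, A x = y ∧ Function.Injective A) : S = ⊤ := by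
  have h1 : ∀ M : Module.End K E, M x ≠ 0 → M ∈ S := fun M hM ↦ by
    obtain ⟨A, hA, hAx, hAi⟩ := hS' (M x) hM
    let e := LinearEquiv.ofInjectiveEndo A hAi
    have he : ∀ v, A (e.symm v) = v := e.apply_symm_apply
    convert S.mul_mem hA (hS (e.symm.toLinearMap ∘ₗ M) (hAi ?_)) using 1
    · ext v
      exact (he _).symm
    · exact (he _).trans hAx.symm
  have h2 : ∀ z, z ∉ Submodule.span K {x} → ∃ φ : Dual K E, φ x = 1 ∧ φ z = 0 := fun z hz ↦ by
    have hz0 : z ≠ 0 := by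
      rintro rfl
      exact hz (Submodule.zero_mem _)
    have hxz : x ∉ Submodule.span K {z} := fun h ↦ by
      obtain ⟨c, rfl⟩ := Submodule.mem_span_singleton.1 h
      refine hz (Submodule.mem_span_singleton.2 ⟨c⁻¹, inv_smul_smul₀ ?_ z⟩)
      rintro rfl
      exact hx (zero_smul K z)
    obtain ⟨φ, hφx, hφz⟩ := Submodule.exists_le_ker_of_notMem hxz
    refine ⟨(φ x)⁻¹ • φ, by simp [hφx], ?_⟩
    simp [mem_ker.1 (hφz (Submodule.mem_span_singleton_self z))]
  refine eq_top_iff.2 fun M _ ↦ ?_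
  by_cases hMx : M x = 0
  swap
  · exact h1 M hMx
  by_cases hM : M = 0
  · obtain ⟨z, hz⟩ : ∃ z, z ∉ Submodule.span K {x} := by
      by_contra! h
      have htop : Submodule.span K {x} = ⊤ := eq_top_iff.2 fun z _ ↦ h z
      have := finrank_span_singleton (K := K) hx
      rw [htop, finrank_top] at this
      omega
    obtain ⟨φ, hφx, hφz⟩ := h2 z hz
    convert S.mul_mem (h1 (φ.smulRight x) ?_) (h1 (φ.smulRight z) ?_) using 1
    · ext v
      simp [hM, hφz]
    · simpa [hφx] using hx
    · rw [smulRight_apply, hφx, one_smul]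
      rintro rfl
      exact hz (Submodule.zero_mem _)
  · obtain ⟨z, hMz⟩ : ∃ z, M z ≠ 0 := by
      by_contra! h
      exact hM (LinearMap.ext h)
    have hz : z ∉ Submodule.span K {x} := fun h ↦ by
      obtain ⟨c, rfl⟩ := Submodule.mem_span_singleton.1 h
      exact hMz (by rw [map_smul, hMx, smul_zero])
    obtain ⟨φ, hφx, hφz⟩ := h2 z hz
    convert S.mul_mem (h1 (M * (1 + φ.smulRight z)) ?_) (h1 (1 - φ.smulRight z) ?_) using 1
    · ext v
      simp [hφz]
    · simpa [hφx, hMx] using hMz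
    · rw [sub_apply, smulRight_apply, hφx, one_smul, Module.End.one_apply, sub_ne_zero]
      rintro rfl
      exact hz (Submodule.mem_span_singleton_self _)

end Subsemigroup

theorem closure_affine_eq_top_of_induced {n : ℕ} [FiniteDimensional K E] [FiniteDimensional K E']
    {π : E →ₗ[K] E'} {x : E} {V : Submodule K (E →ₗ[K] E)} {X : Module.End K E}
    (hπ : Function.Surjective π) (hπx : ker π = Submodule.span K {x}) (hx0 : x ≠ 0)
    (hE : finrank K E = n + 1) (hV : (n + 1) * (n + 1) < finrank K V + n)
    (hx : EvaluatesOntoAt V x) (hxV : rankOneForms π x V ≠ ⊤)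
    (ih : ∀ (V' : Submodule K (E' →ₗ[K] E')) (X' : Module.End K E'),
      n * n + 1 < finrank K V' + n → Subsemigroup.closure {A : Module.End K E' | A - X' ∈ V'} = ⊤) :
    Subsemigroup.closure {A : Module.End K E | A - X ∈ V} = ⊤ := by
  have hE' := finrank_of_surjective_of_ker_eq_span hπ hπx hx0
  have hn : (n + 1) * (n + 1) = n * n + 2 * n + 1 := by ring
  have hn0 : n ≠ 0 := by
    rintro rfl
    have := Submodule.finrank_le V
    rw [finrank_linearMap, hE] at this
    omega
  obtain ⟨X', V', h, hdim⟩ := exists_induced_affine X hx hπ hπx hπx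
  have hL := Submodule.finrank_lt hxV
  rw [Subspace.dual_finrank_eq] at hL
  have hV' := Submodule.finrank_le V'
  rw [finrank_linearMap, show finrank K E' = n by omega] at hV'
  obtain ⟨ℓ₀, hℓ₀, hℓ₀0⟩ := (Submodule.ne_bot_iff (rankOneForms π x V)).1 fun h ↦ by
    rw [h, finrank_bot] at hdim
    omega
  refine subsemigroup_eq_top hx0 (by omega) (fun T hT ↦
    mem_subsemigroup_of_apply_eq_self hπ hπx hx0 hℓ₀0 (fun N ↦ ?_) hT) fun y hy ↦ ?_
  · have hN : N ∈ Subsemigroup.closure {A : Module.End K E' | A - X' ∈ V'} :=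
      ih V' X' (by omega) ▸ Subsemigroup.mem_top N
    induction hN using Subsemigroup.closure_induction with
    | mem N hN =>
      obtain ⟨A, hA, hAx, hAN⟩ := h N hN
      refine ⟨A, hAx, hAN, fun t ↦ Subsemigroup.subset_closure ?_⟩
      rw [Set.mem_ofPred_eq, add_sub_right_comm]
      exact add_mem hA (V.smul_mem t hℓ₀)
    | mul N₁ N₂ _ _ h₁ h₂ =>
      obtain ⟨A₁, hx₁, hN₁, hA₁⟩ := h₁
      obtain ⟨A₂, hx₂, hN₂, hA₂⟩ := h₂
      refine ⟨A₁ * A₂, by simp [hx₁, hx₂], ?_, fun t ↦ ?_⟩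
      · ext v
        have h1 := congr($hN₁ (A₂ v))
        have h2 := congr($hN₂ v)
        simp only [comp_apply, Module.End.mul_apply] at h1 h2 ⊢
        rw [h1, h2]
      · convert Subsemigroup.mul_mem _ (hA₁ 0) (hA₂ t) using 1
        ext v
        simp [hx₁]
  · obtain ⟨A, hA, hAx, hAi⟩ := exists_injective_apply_eq hE hE X hV hx0 hx hy
    exact ⟨A, Subsemigroup.subset_closure hA, hAx, hAi⟩

theorem closure_affine_eq_top {n : ℕ} {E : Type*} [AddCommGroup E] [Module K E]
    [FiniteDimensional K E] (hE : finrank K E = n) (V : Submodule K (E →ₗ[K] E))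
    (X : Module.End K E) (hV : n * n + 1 < finrank K V + n) :
    Subsemigroup.closure {A : Module.End K E | A - X ∈ V} = ⊤ := by
  induction n generalizing E with
  | zero =>
    have := Submodule.finrank_le V
    rw [finrank_linearMap, hE] at this
    omega
  | succ n ih =>
    by_cases hVtop : V = ⊤
    · exact eq_top_iff.2 fun A _ ↦ Subsemigroup.subset_closure
        (show A - X ∈ V from hVtop ▸ Submodule.mem_top)
    have hdim : finrank K (E →ₗ[K] E) < finrank K V + finrank K E := by
      rw [finrank_linearMap, hE]
      omega
    obtain ⟨x, hx0, hx⟩ := exists_evaluatesOntoAt V hdim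
    have hπ := (Submodule.span K {x}).mkQ_surjective
    have hπx := (Submodule.span K {x}).ker_mkQ
    obtain ⟨y, hyU, hyV⟩ := exists_rankOneForms_ne_top hVtop hx hπ hπx
      (span_not_evaluatesOntoAt_ne_top V hdim)
    have hy0 : y ≠ 0 := by
      rintro rfl
      exact hyU (Submodule.zero_mem _)
    have hy : EvaluatesOntoAt V y := by
      by_contra h
      exact hyU (Submodule.subset_span h)
    obtain ⟨B, hB, hBy, hBi⟩ := exists_injective_apply_eq hE hE X (by omega) hy0 hy hx0
    let μ : (E →ₗ[K] E) →ₗ[K] E →ₗ[K] E := compRight K B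
    have hμ : Function.Injective μ := fun C D hCD ↦ by
      ext v
      exact hBi congr($hCD v)
    have hE' := finrank_of_surjective_of_ker_eq_span hπ hπx hx0
    have hfin : finrank K (V.map μ) = finrank K V :=
      (Submodule.equivMapOfInjective μ hμ V).finrank_eq.symm
    have hx' : EvaluatesOntoAt (V.map μ) x := fun z ↦ by
      obtain ⟨w, rfl⟩ := LinearMap.surjective_of_injective hBi z
      obtain ⟨A, hA, rfl⟩ := hx w
      exact ⟨B * A, ⟨A, hA, rfl⟩, rfl⟩
    have hxV : rankOneForms (Submodule.span K {x}).mkQ x (V.map μ) ≠ ⊤ := fun h ↦ by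
      refine hyV (eq_top_iff.2 fun ℓ _ ↦ ?_)
      obtain ⟨C, hC, hCℓ⟩ : ℓ ∈ rankOneForms (Submodule.span K {x}).mkQ x (V.map μ) :=
        h ▸ Submodule.mem_top
      have hyC : rankOneMap (Submodule.span K {x}).mkQ y ℓ = C := by
        refine hμ (hCℓ.trans ?_).symm
        ext v
        simp [μ, hBy]
      change _ ∈ V
      rwa [hyC]
    have := closure_affine_eq_top_of_induced (X := B * X) hπ hπx hx0 hE (by omega) hx' hxV
      fun V' X' h ↦ ih (by omega) V' X' h
    rw [eq_top_iff, ← this, Subsemigroup.closure_le]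
    rintro A ⟨C, hC, hCA⟩
    have : A = B * (C + X) := by
      rw [mul_add]
      exact eq_add_of_sub_eq hCA.symm
    rw [this]
    refine Subsemigroup.mul_mem _ (Subsemigroup.subset_closure hB) (Subsemigroup.subset_closure ?_)
    simpa using hC

end LinearMap

theorem affine_subspace_generates_semigroup (K : Type*) [Field K] (n : ℕ) (hn : 0 < n)
    (V : Submodule K (Matrix (Fin n) (Fin n) K)) (X : Matrix (Fin n) (Fin n) K)
    (hV : n ^ 2 - Module.finrank K V < n - 1) (M : Matrix (Fin n) (Fin n) K) :
    ∃ l : List (Matrix (Fin n) (Fin n) K), l ≠ [] ∧ (∀ A ∈ l, A - X ∈ V) ∧ l.prod = M := by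
  let e := (Matrix.toLinAlgEquiv' : Matrix (Fin n) (Fin n) K ≃ₐ[K] _)
  have hfin : finrank K (V.map e.toLinearMap) = finrank K V :=
    (Submodule.equivMapOfInjective e.toLinearMap e.injective V).finrank_eq.symm
  have htop := LinearMap.closure_affine_eq_top (finrank_fin_fun K) (V.map e.toLinearMap) (e X) (by
    rw [hfin, ← sq]
    omega)
  have hM : e M ∈ Subsemigroup.closure {A | A - e X ∈ V.map e.toLinearMap} :=
    htop ▸ Subsemigroup.mem_top _
  suffices h : ∀ A ∈ Subsemigroup.closure {A | A - e X ∈ V.map e.toLinearMap},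
      ∃ l : List (Matrix (Fin n) (Fin n) K), l ≠ [] ∧ (∀ B ∈ l, B - X ∈ V) ∧ l.prod = e.symm A by
    simpa using h _ hM
  intro A hA
  induction hA using Subsemigroup.closure_induction with
  | mem A hA =>
    obtain ⟨C, hC, hCA⟩ := hA
    refine ⟨[e.symm A], by simp, ?_, by simp⟩
    have : C = e.symm A - X := e.injective (hCA.trans (by simp))
    simpa [← this] using hC
  | mul A B _ _ hA hB =>
    obtain ⟨l, hl, hlV, hlA⟩ := hA
    obtain ⟨l', _, hlV', hlB⟩ := hB
    refine ⟨l ++ l', by simp [hl], fun C hC ↦ ?_, by simp [hlA, hlB]⟩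
    exact (List.mem_append.1 hC).elim (hlV C) (hlV' C)
end

section
/- Let K be a field and n ≥ 3. Let H_1 and H_2 be linear hyperplanes of M_n(K). Then every matrix A ∈ M_n(K) splits as A = BC for some B ∈ H_1 and C ∈ H_2. -/
open Matrix

/-- A linear hyperplane of matrices contains the orthogonal, for the trace form, of some nonzero
matrix. -/
theorem exists_trace_mul_eq_zero_imp_mem {K : Type*} [Field K] {n : ℕ} (hn : 0 < n)
    (H : Submodule K (Matrix (Fin n) (Fin n) K)) (hH : Module.finrank K H = n ^ 2 - 1) :
    ∃ P : Matrix (Fin n) (Fin n) K, P ≠ 0 ∧ ∀ B, (P * B).trace = 0 → B ∈ H := by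
  have hdim : Module.finrank K (Matrix (Fin n) (Fin n) K) = n ^ 2 := by
    simp [Module.finrank_matrix, sq]
  have hpos : 0 < n ^ 2 := by positivity
  have hlt : H < ⊤ := by
    rw [lt_top_iff_ne_top]
    rintro rfl
    rw [finrank_top, hdim] at hH
    omega
  obtain ⟨f, hf, hHf⟩ := Submodule.exists_le_ker_of_lt_top H hlt
  have hker : H = LinearMap.ker f := by
    apply Submodule.eq_of_le_of_finrank_le hHf
    have h : LinearMap.ker f < ⊤ := by
      rw [lt_top_iff_ne_top]
      exact fun h => hf (LinearMap.ker_eq_top.1 h)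
    have := Submodule.finrank_lt h.ne
    rw [hdim] at this
    omega
  have hfP : ∀ B, f B = ((Matrix.of fun j i => f (single i j 1)) * B).trace := by
    intro B
    conv_lhs => rw [matrix_eq_sum_single B]
    simp only [map_sum, Matrix.trace, Matrix.diag, Matrix.mul_apply, Matrix.of_apply]
    rw [Finset.sum_comm]
    refine Finset.sum_congr rfl fun j _ => Finset.sum_congr rfl fun i _ => ?_
    rw [← mul_one (B i j), ← smul_eq_mul, ← smul_single, map_smul, smul_eq_mul, smul_eq_mul,
      mul_one, mul_comm]
  refine ⟨_, ?_, fun B hB => by rw [hker, LinearMap.mem_ker, hfP, hB]⟩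
  intro h
  apply hf
  ext1 B
  rw [hfP, h]
  simp

/-- Every square matrix is diagonal up to multiplication by invertible matrices. -/
theorem exists_units_mul_diagonal_mul {K : Type*} [Field K] {n : ℕ}
    (P : Matrix (Fin n) (Fin n) K) :
    ∃ (U V : (Matrix (Fin n) (Fin n) K)ˣ) (d : Fin n → K), P = U * diagonal d * V := by
  obtain ⟨L, L', d, h⟩ := Pivot.exists_list_transvec_mul_diagonal_mul_list_transvec P
  have hu : ∀ l : List (TransvectionStruct (Fin n) K),
      IsUnit (l.map TransvectionStruct.toMatrix).prod := by
    intro l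
    rw [Matrix.isUnit_iff_isUnit_det, TransvectionStruct.det_toMatrix_prod]
    exact isUnit_one
  exact ⟨(hu L).unit, (hu L').unit, d, h⟩

theorem exists_derangement {n : ℕ} (hn : 2 ≤ n) : ∃ σ : Equiv.Perm (Fin n), ∀ i, σ i ≠ i := by
  obtain ⟨m, rfl⟩ := Nat.exists_eq_add_of_le' hn
  refine ⟨finRotate (m + 2), fun i => ?_⟩
  rw [finRotate_apply]
  simp

theorem exists_derangement_sq {n : ℕ} (hn : 3 ≤ n) :
    ∃ σ : Equiv.Perm (Fin n), (∀ i, σ i ≠ i) ∧ ∀ i, σ (σ i) ≠ i := by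
  obtain ⟨m, rfl⟩ := Nat.exists_eq_add_of_le' hn
  refine ⟨finRotate (m + 3), fun i => ?_, fun i => ?_⟩
  · rw [finRotate_apply]
    simp
  · rw [finRotate_apply, finRotate_apply, add_assoc]
    intro h
    have h2 := add_eq_left.1 h
    have h3 := congrArg Fin.val h2
    rw [Fin.val_add, Fin.val_one, Fin.val_zero, Nat.mod_eq_of_lt (by omega)] at h3
    omega

theorem submatrix_one_mul_submatrix_one {K : Type*} [Field K] {n : ℕ}
    (σ : Equiv.Perm (Fin n)) :
    (1 : Matrix (Fin n) (Fin n) K).submatrix id σ * (1 : Matrix (Fin n) (Fin n) K).submatrix σ id = 1 := by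
  rw [submatrix_mul_equiv, one_mul, submatrix_id_id]

/-- For `n ≥ 2`, every hyperplane of `n × n` matrices contains an invertible matrix. -/
theorem exists_mul_eq_one_trace_eq_zero {K : Type*} [Field K] {n : ℕ} (hn : 2 ≤ n)
    (P : Matrix (Fin n) (Fin n) K) :
    ∃ B C : Matrix (Fin n) (Fin n) K, B * C = 1 ∧ (P * B).trace = 0 := by
  obtain ⟨U, V, d, rfl⟩ := exists_units_mul_diagonal_mul P
  obtain ⟨σ, hσ⟩ := exists_derangement hn
  set R := (1 : Matrix (Fin n) (Fin n) K).submatrix id σ with hR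
  refine ⟨(V⁻¹).1 * R * (U⁻¹).1, U.1 * ((1 : Matrix (Fin n) (Fin n) K).submatrix σ id) * V.1, ?_, ?_⟩
  · calc _ = (V⁻¹).1 * (R * ((U⁻¹).1 * U) * (1 : Matrix (Fin n) (Fin n) K).submatrix σ id) * V := by
          simp only [mul_assoc]
      _ = 1 := by
          rw [Units.inv_mul, mul_one, submatrix_one_mul_submatrix_one, mul_one, Units.inv_mul]
  · have : U * diagonal d * V * ((V⁻¹).1 * R * (U⁻¹).1) = U * (diagonal d * R * (U⁻¹).1) := by
      rw [mul_assoc _ V.1, ← mul_assoc V.1, ← mul_assoc V.1, Units.mul_inv, one_mul]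
      simp only [mul_assoc]
    rw [this, trace_mul_comm, mul_assoc, Units.inv_mul, mul_one]
    simp only [Matrix.trace, Matrix.diag, diagonal_mul, hR, submatrix_apply]
    exact Finset.sum_eq_zero fun i _ => by rw [id, one_apply_ne (hσ i).symm, mul_zero]

theorem exists_mul_eq_one_of_diagonal_of_apply_ne_zero {K : Type*} [Field K] {n : ℕ}
    (hn : 3 ≤ n) (d : Fin n → K) (Q : Matrix (Fin n) (Fin n) K) (k : Fin n) (hQ : Q k k ≠ 0) :
    ∃ B C : Matrix (Fin n) (Fin n) K,
      B * C = 1 ∧ (diagonal d * B).trace = 0 ∧ (Q * C).trace = 0 := by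
  obtain ⟨σ, hσ, hσ2⟩ := exists_derangement_sq hn
  obtain ⟨l, rfl⟩ := σ.surjective k
  set R := (1 : Matrix (Fin n) (Fin n) K).submatrix σ id with hR
  set R' := (1 : Matrix (Fin n) (Fin n) K).submatrix id σ with hR'
  have hRR : R' * R = 1 := submatrix_one_mul_submatrix_one σ
  set a := -(Q * R).trace / Q (σ l) (σ l) with ha
  have hss : single (σ l) l a * single (σ l) l a = 0 :=
    single_mul_single_of_ne _ _ _ _ (hσ l).symm _
  refine ⟨R' * (1 - single (σ l) l a), (1 + single (σ l) l a) * R, ?_, ?_, ?_⟩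
  · rw [mul_assoc, ← mul_assoc (1 - _), sub_mul, mul_add, mul_add, hss]
    simp [hRR]
  · simp only [Matrix.trace, Matrix.diag, diagonal_mul]
    refine Finset.sum_eq_zero fun i _ => ?_
    rw [mul_sub, mul_one, Matrix.sub_apply, hR', submatrix_apply, id, one_apply_ne (hσ i).symm]
    by_cases hi : i = l
    · subst hi
      rw [mul_single_apply_same, submatrix_apply, id, one_apply_ne (hσ2 i).symm]
      simp
    · rw [mul_single_apply_of_ne _ _ _ _ _ hi]
      simp
  · have hs : single (σ l) l a * R = single (σ l) (σ l) a := by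
      ext i j
      by_cases hi : i = σ l
      · subst hi
        rw [single_mul_apply_same, hR, submatrix_apply, id, single_apply, one_apply]
        simp
      · rw [single_mul_apply_of_ne _ _ _ _ _ hi, single_apply_of_row_ne (Ne.symm hi)]
    rw [add_mul, one_mul, hs, mul_add, trace_add, trace_mul_single, op_smul_eq_mul, ha,
      mul_div_cancel₀ _ hQ, add_neg_cancel]

theorem exists_mul_eq_one_of_diagonal {K : Type*} [Field K] {n : ℕ} (hn : 3 ≤ n)
    (d : Fin n → K) (Q : Matrix (Fin n) (Fin n) K) (hQ : Q ≠ 0) :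
    ∃ B C : Matrix (Fin n) (Fin n) K,
      B * C = 1 ∧ (diagonal d * B).trace = 0 ∧ (Q * C).trace = 0 := by
  by_cases hdiag : ∃ k, Q k k ≠ 0
  · obtain ⟨k, hk⟩ := hdiag
    exact exists_mul_eq_one_of_diagonal_of_apply_ne_zero hn d Q k hk
  push Not at hdiag
  obtain ⟨j, i, hji⟩ : ∃ j i, Q j i ≠ 0 := by
    by_contra! h
    exact hQ (Matrix.ext h)
  have hij : i ≠ j := by
    rintro rfl
    exact hji (hdiag i)
  obtain ⟨s, t, hst, hd⟩ : ∃ s t : K, (s ≠ 0 ∨ t ≠ 0) ∧ t * d j = d i * s := by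
    by_cases h : d i = 0
    · exact ⟨1, 0, by simp, by simp [h]⟩
    · exact ⟨d j, d i, Or.inr h, rfl⟩
  have hmul : ∀ x y : K, single i j x * single i j y = 0 := fun x y =>
    single_mul_single_of_ne _ _ _ _ hij.symm _
  have hinv : ∀ x : K, (1 + single i j x) * (1 - single i j x) = 1 := fun x => by
    rw [add_mul, mul_sub, mul_sub, hmul]; simp
  have hinv' : ∀ x : K, (1 - single i j x) * (1 + single i j x) = 1 := fun x => by
    rw [sub_mul, mul_add, mul_add, hmul]; simp
  have hD : (1 + single i j t) * diagonal d * (1 - single i j s) = diagonal d := by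
    have h1 : single i j t * diagonal d = single i j (t * d j) := by
      ext a b
      simp only [mul_diagonal, single_apply]
      split_ifs with h <;> simp [h]
    have h2 : diagonal d * single i j s = single i j (d i * s) := by
      ext a b
      simp only [diagonal_mul, single_apply]
      split_ifs with h <;> simp [h]
    rw [add_mul, one_mul, h1, mul_sub, mul_one, add_mul, h2, hmul, hd]
    abel
  have hQ' : ∃ k, ((1 + single i j s) * Q * (1 - single i j t)) k k ≠ 0 := by
    rcases hst with hs | ht
    · refine ⟨i, ?_⟩
      rw [mul_sub, mul_one, Matrix.sub_apply, mul_single_apply_of_ne _ _ _ _ _ hij, add_mul, one_mul,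
        Matrix.add_apply, hdiag, single_mul_apply_same]
      simp [hs, hji]
    · refine ⟨j, ?_⟩
      rw [mul_assoc, add_mul, one_mul, Matrix.add_apply, single_mul_apply_of_ne _ _ _ _ _ hij.symm,
        mul_sub, mul_one, Matrix.sub_apply, hdiag, mul_single_apply_same]
      simp [ht, hji]
  obtain ⟨k, hk⟩ := hQ'
  obtain ⟨B, C, hBC, hB, hC⟩ := exists_mul_eq_one_of_diagonal_of_apply_ne_zero hn d _ k hk
  refine ⟨(1 - single i j s) * B * (1 + single i j t),
    (1 - single i j t) * C * (1 + single i j s), ?_, ?_, ?_⟩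
  · calc _ = (1 - single i j s) * (B * ((1 + single i j t) * (1 - single i j t)) * C) *
          (1 + single i j s) := by simp only [mul_assoc]
      _ = 1 := by rw [hinv, mul_one, hBC, mul_one, hinv']
  · rw [← mul_assoc, trace_mul_comm, ← mul_assoc, ← mul_assoc, hD, hB]
  · rw [← mul_assoc, trace_mul_comm, ← mul_assoc, ← mul_assoc, hC]

theorem exists_mul_eq_one {K : Type*} [Field K] {n : ℕ} (hn : 3 ≤ n)
    (P Q : Matrix (Fin n) (Fin n) K) (hQ : Q ≠ 0) :
    ∃ B C : Matrix (Fin n) (Fin n) K,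
      B * C = 1 ∧ (P * B).trace = 0 ∧ (Q * C).trace = 0 := by
  obtain ⟨U, V, d, rfl⟩ := exists_units_mul_diagonal_mul P
  have hQ' : V.1 * Q * U ≠ 0 := by
    rwa [Ne, Units.mul_left_eq_zero, Units.mul_right_eq_zero]
  obtain ⟨B, C, hBC, hB, hC⟩ := exists_mul_eq_one_of_diagonal hn d _ hQ'
  refine ⟨(V⁻¹).1 * B * (U⁻¹).1, U.1 * C * V.1, ?_, ?_, ?_⟩
  · calc _ = (V⁻¹).1 * (B * ((U⁻¹).1 * U) * C) * V := by simp only [mul_assoc]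
      _ = 1 := by rw [Units.inv_mul, mul_one, hBC, mul_one, Units.inv_mul]
  · rw [← mul_assoc, trace_mul_comm]
    calc _ = (((U⁻¹).1 * U) * diagonal d * (V * (V⁻¹).1) * B).trace := by simp only [mul_assoc]
      _ = 0 := by rw [Units.inv_mul, Units.mul_inv, one_mul, mul_one, hB]
  · rw [← mul_assoc, trace_mul_comm, ← mul_assoc, ← mul_assoc, hC]

theorem exists_eq_mul_of_row_eq_zero {K : Type*} [Field K] {m : ℕ} (hm : 2 ≤ m)
    (P Q A : Matrix (Fin (m + 1)) (Fin (m + 1)) K) (k j : Fin (m + 1))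
    (hA : ∀ i, A k i = 0) (hQ : Q j k ≠ 0) :
    ∃ B C : Matrix (Fin (m + 1)) (Fin (m + 1)) K,
      A = B * C ∧ (P * B).trace = 0 ∧ (Q * C).trace = 0 := by
  set E : Matrix (Fin (m + 1)) (Fin m) K :=
    (1 : Matrix (Fin (m + 1)) (Fin (m + 1)) K).submatrix id k.succAbove with hE
  have hEE : Eᵀ * E = 1 := by
    ext a b
    simp [hE, Matrix.mul_apply, one_apply, k.succAbove_right_injective.eq_iff]
  have hEA : E * (Eᵀ * A) = A := by
    ext a b
    have h : ∀ c, (Eᵀ * A) c b = A (k.succAbove c) b := fun c => by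
      simp [hE, Matrix.mul_apply, one_apply]
    rw [Matrix.mul_apply]
    simp only [h]
    obtain rfl | ⟨c, rfl⟩ := k.eq_self_or_eq_succAbove a
    · rw [hA]
      exact Finset.sum_eq_zero fun c _ => by simp [hE, one_apply, (Fin.succAbove_ne a c).symm]
    · simp [hE, one_apply, k.succAbove_right_injective.eq_iff]
  have hEk : ∀ a : K, Eᵀ * single k j a = 0 := fun a => by
    ext c b
    by_cases hb : b = j
    · subst hb
      simp [hE, one_apply]
    · rw [mul_single_apply_of_ne _ _ _ _ _ hb, Matrix.zero_apply]
  obtain ⟨B, C, hBC, hB⟩ := exists_mul_eq_one_trace_eq_zero hm (Eᵀ * P * E)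
  set N := E * C * Eᵀ * A with hN
  set a := -(Q * N).trace / Q j k with ha
  refine ⟨E * B * Eᵀ, N + single k j a, ?_, ?_, ?_⟩
  · rw [Matrix.mul_add, Matrix.mul_assoc _ Eᵀ (single _ _ _), hEk, Matrix.mul_zero, add_zero]
    calc A = E * (B * 1 * C) * (Eᵀ * A) := by
          rw [Matrix.mul_one, hBC, Matrix.mul_one, hEA]
      _ = _ := by rw [← hEE, hN]; simp only [Matrix.mul_assoc]
  · rw [← Matrix.mul_assoc, trace_mul_comm, ← Matrix.mul_assoc, ← Matrix.mul_assoc, hB]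
  · rw [mul_add, trace_add, trace_mul_single, op_smul_eq_mul, ha,
      mul_div_cancel₀ _ hQ, add_neg_cancel]

theorem exists_eq_mul_of_not_isUnit {K : Type*} [Field K] {n : ℕ} (hn : 3 ≤ n)
    (P Q A : Matrix (Fin n) (Fin n) K) (hQ : Q ≠ 0) (hA : ¬ IsUnit A) :
    ∃ B C : Matrix (Fin n) (Fin n) K, A = B * C ∧ (P * B).trace = 0 ∧ (Q * C).trace = 0 := by
  obtain ⟨m, rfl⟩ : ∃ m, n = m + 1 := ⟨n - 1, by omega⟩
  obtain ⟨U, W, d, rfl⟩ := exists_units_mul_diagonal_mul A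
  obtain ⟨k, hk⟩ : ∃ k, d k = 0 := by
    by_contra! h
    refine hA ((U.isUnit.mul ?_).mul W.isUnit)
    rw [isUnit_diagonal, Pi.isUnit_iff]
    exact fun i => (h i).isUnit
  have hWQ : W.1 * Q ≠ 0 := by rwa [Ne, Units.mul_right_eq_zero]
  obtain ⟨V, j, hj⟩ : ∃ (V : (Matrix (Fin (m + 1)) (Fin (m + 1)) K)ˣ) (j : _),
      (W.1 * Q * V) j k ≠ 0 := by
    by_cases h : ∃ j, (W.1 * Q) j k ≠ 0
    · obtain ⟨j, hj⟩ := h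
      exact ⟨1, j, by simpa using hj⟩
    push Not at h
    obtain ⟨j, i, hji⟩ : ∃ j i, (W.1 * Q) j i ≠ 0 := by
      by_contra! h
      exact hWQ (Matrix.ext h)
    have hik : i ≠ k := by
      rintro rfl
      exact hji (h j)
    have hu : IsUnit (transvection i k (1 : K)) := by
      rw [isUnit_iff_isUnit_det, det_transvection_of_ne _ _ hik]
      exact isUnit_one
    refine ⟨hu.unit, j, ?_⟩
    rw [IsUnit.unit_spec, mul_transvection_apply_same, h]
    simpa using hji
  obtain ⟨B, C, hBC, hB, hC⟩ := exists_eq_mul_of_row_eq_zero (by omega : 2 ≤ m)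
    ((V⁻¹).1 * P * U.1) (W.1 * Q * V.1) (diagonal d) k j
    (fun i => by by_cases h : k = i <;> simp [h, ← hk]) hj
  refine ⟨U * B * (V⁻¹).1, V * C * W, ?_, ?_, ?_⟩
  · rw [hBC]
    calc _ = U * B * 1 * C * W := by simp only [mul_assoc, mul_one]
      _ = _ := by rw [← Units.inv_mul V]; simp only [mul_assoc]
  · rw [← mul_assoc, trace_mul_comm, ← mul_assoc, ← mul_assoc, hB]
  · rw [← mul_assoc, trace_mul_comm, ← mul_assoc, ← mul_assoc, hC]

theorem two_hyperplanes_product (K : Type*) [Field K] (n : ℕ) (hn : 3 ≤ n)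
    (H₁ H₂ : Submodule K (Matrix (Fin n) (Fin n) K))
    (hH₁ : Module.finrank K H₁ = n ^ 2 - 1) (hH₂ : Module.finrank K H₂ = n ^ 2 - 1)
    (A : Matrix (Fin n) (Fin n) K) :
    ∃ B ∈ H₁, ∃ C ∈ H₂, A = B * C := by
  obtain ⟨P, -, hP⟩ := exists_trace_mul_eq_zero_imp_mem (by omega) H₁ hH₁
  obtain ⟨Q, hQ0, hQ⟩ := exists_trace_mul_eq_zero_imp_mem (by omega) H₂ hH₂
  by_cases hA : IsUnit A
  · have hAQ : A * Q ≠ 0 := by rwa [Ne, hA.mul_right_eq_zero]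
    obtain ⟨B, C, hBC, hB, hC⟩ := exists_mul_eq_one hn P (A * Q) hAQ
    refine ⟨B, hP B hB, C * A, hQ _ ?_, ?_⟩
    · rw [← mul_assoc, trace_mul_comm, ← mul_assoc, hC]
    · rw [← mul_assoc, hBC, one_mul]
  · obtain ⟨B, C, hBC, hB, hC⟩ := exists_eq_mul_of_not_isUnit hn P Q A hQ0 hA
    exact ⟨B, hP B hB, C, hQ C hC, hBC⟩
end
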